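/- arXiv:2302.06336 — 5 statements merged into one kernel-verified Lean document; each statement's English description precedes it below -/
import Mathlib

section
/- There is an absolute constant C > 0 such that for every integer n ≥ 2 there exists a subset S of ZMod n with |S| ≤ C · n^(2/3) · (log n)^(1/3) and with the following covering property: for all nonnegative integers k1, k2, k3 with k1 + k2 + k3 = n, there exists i ∈ ZMod n such that i ∈ S, i + k1 ∈ S and i + k1 + k2 ∈ S. -/
/-!
The set `S` is explicit, and it is even of size `O(n^(2/3))`, with no logarithm. Take
`q = ⌈n^(1/3)⌉` and let `S` be the image in `ZMod n` of `digitSet q`, which consists of integers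
below `3 q^3` for which one of the three lowest base-`q` digits (the digit at `1`, `q` or `q^2`)
vanishes; there are `O(q^2)` of these. Given shifts `a, b ≤ n ≤ q^3`, look for `i = q s + q^2 t` with `s, t < q`. The units digit
of `i` is zero. Hence adding `q s` to `a` produces no carry from the units, and `s` can be chosen to
make the `q`-digit of `i + a` zero, whatever `t` is. Then `t` can be chosen to make the `q^2`-digit
of `i + b` zero (`exists_shift_mem_digitSet`). Since `log n` is bounded below for `n ≥ 2`, the
logarithmic factor in the bound only costs a constant.
-/

/-- A set of integers one of whose three lowest base-`q` digits is zero. The three pieces are the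
integers below `q ^ 3` with vanishing units digit, and those below `3 * q ^ 3` with vanishing
`q`-digit, respectively vanishing `q ^ 2`-digit. -/
def digitSet (q : ℕ) : Finset ℕ :=
  (Finset.range (q ^ 2)).image (fun y => q * y) ∪
  ((Finset.range (3 * q) ×ˢ Finset.range q).image (fun p => q ^ 2 * p.1 + p.2) ∪
  (Finset.range 3 ×ˢ Finset.range (q ^ 2)).image (fun p => q ^ 3 * p.1 + p.2))

lemma card_digitSet_le (q : ℕ) : (digitSet q).card ≤ 7 * q ^ 2 := by
  unfold digitSet
  refine (Finset.card_union_le _ _).trans ?_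
  refine (Nat.add_le_add Finset.card_image_le (Finset.card_union_le _ _)).trans ?_
  refine (Nat.add_le_add_left (Nat.add_le_add Finset.card_image_le Finset.card_image_le) _).trans ?_
  simp only [Finset.card_product, Finset.card_range]
  apply le_of_eq
  ring

lemma exists_lt_dvd_add {q : ℕ} (hq : 0 < q) (m : ℕ) : ∃ s < q, q ∣ m + s := by
  by_cases h : m % q = 0
  · exact ⟨0, hq, by simpa using Nat.dvd_of_mod_eq_zero h⟩
  · have h1 := Nat.mod_lt m hq
    have h2 := Nat.div_add_mod m q
    refine ⟨q - m % q, by omega, m / q + 1, ?_⟩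
    rw [mul_add]
    omega

/-- The covering property over the integers: `digitSet q` contains a translate of every
pattern `{0, a, b}` with `a, b ≤ q ^ 3`. -/
lemma exists_shift_mem_digitSet {q : ℕ} (hq : 0 < q) {a b : ℕ} (ha : a ≤ q ^ 3)
    (hb : b ≤ q ^ 3) :
    ∃ i ∈ digitSet q, i + a ∈ digitSet q ∧ i + b ∈ digitSet q := by
  obtain ⟨s, hs, u, hu⟩ := exists_lt_dvd_add hq (a / q)
  obtain ⟨t, ht, w, hw⟩ := exists_lt_dvd_add hq ((b + q * s) / q ^ 2)
  have hq2 : 0 < q ^ 2 := by positivity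
  have ea := Nat.div_add_mod a q
  have eb := Nat.div_add_mod (b + q * s) (q ^ 2)
  have ha' : a / q ≤ q ^ 2 := Nat.div_le_of_le_mul (by nlinarith)
  have hb' : (b + q * s) / q ^ 2 ≤ q + 1 := Nat.div_le_of_le_mul (by nlinarith)
  have hu' : u < q + 1 := lt_of_mul_lt_mul_left (a := q) (by nlinarith) hq.le
  have hw' : w < 3 := lt_of_mul_lt_mul_left (a := q) (by nlinarith) hq.le
  refine ⟨q * (s + q * t), ?_, ?_, ?_⟩
  · refine Finset.mem_union_left _ (Finset.mem_image.2 ⟨s + q * t, ?_, rfl⟩)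
    rw [Finset.mem_range]
    nlinarith
  · refine Finset.mem_union_right _ (Finset.mem_union_left _
      (Finset.mem_image.2 ⟨(u + t, a % q), ?_, ?_⟩))
    · simp only [Finset.mem_product, Finset.mem_range]
      exact ⟨by omega, Nat.mod_lt _ hq⟩
    · linear_combination ea - q * hu
  · refine Finset.mem_union_right _ (Finset.mem_union_right _
      (Finset.mem_image.2 ⟨(w, (b + q * s) % q ^ 2), ?_, ?_⟩))
    · simp only [Finset.mem_product, Finset.mem_range]
      exact ⟨hw', Nat.mod_lt _ hq2⟩
    · linear_combination eb - q ^ 2 * hw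

lemma half_le_log_rpow {n : ℕ} (hn : 2 ≤ n) :
    (1 / 2 : ℝ) ≤ (Real.log n) ^ ((1 : ℝ) / 3) := by
  have h2 : Real.log 2 ≤ Real.log n :=
    Real.log_le_log (by norm_num) (by exact_mod_cast hn)
  have h3 := Real.log_two_gt_d9
  have h8 : ((1 / 8 : ℝ)) ^ ((1 : ℝ) / 3) = 1 / 2 := by
    rw [show (1 / 8 : ℝ) = (1 / 2) ^ (3 : ℝ) by norm_num, ← Real.rpow_mul (by norm_num)]
    norm_num
  rw [← h8]
  exact Real.rpow_le_rpow (by norm_num) (by linarith) (by norm_num)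

/-- There is an absolute constant `C > 0` such that for every `n ≥ 2` there is a subset `S`
of `ZMod n` of size at most `C * n^(2/3) * (log n)^(1/3)` such that for all naturals
`k1, k2, k3` with `k1 + k2 + k3 = n` there is `i ∈ S` with `i + k1 ∈ S` and
`i + k1 + k2 ∈ S`. -/
theorem universal_pants_types_unlabelled :
    ∃ C : ℝ, 0 < C ∧ ∀ n : ℕ, 2 ≤ n →
      ∃ S : Finset (ZMod n),
        (S.card : ℝ) ≤ C * (n : ℝ) ^ ((2 : ℝ) / 3) * (Real.log n) ^ ((1 : ℝ) / 3) ∧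
        ∀ k1 k2 k3 : ℕ, k1 + k2 + k3 = n →
          ∃ i : ZMod n, i ∈ S ∧ i + (k1 : ZMod n) ∈ S ∧
            i + (k1 : ZMod n) + (k2 : ZMod n) ∈ S := by
  -- `56 = 7 * 2 ^ 2 * 2`: `7 q ^ 2` elements, `q ≤ 2 n ^ (1/3)`, and `(log n) ^ (1/3) ≥ 1/2`.
  refine ⟨56, by norm_num, fun n hn => ?_⟩
  set r : ℝ := (n : ℝ) ^ ((1 : ℝ) / 3) with hr
  have hn1 : (1 : ℝ) ≤ n := by exact_mod_cast (by omega : 1 ≤ n)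
  have hr1 : 1 ≤ r := Real.one_le_rpow hn1 (by norm_num)
  have hr3 : r ^ 3 = n := by
    rw [hr, ← Real.rpow_natCast, ← Real.rpow_mul (by linarith)]
    norm_num
  have hr2 : (n : ℝ) ^ ((2 : ℝ) / 3) = r ^ 2 := by
    rw [hr, ← Real.rpow_natCast, ← Real.rpow_mul (by linarith)]
    norm_num
  obtain ⟨q, hrq, hqr⟩ : ∃ q : ℕ, r ≤ q ∧ (q : ℝ) ≤ 2 * r :=
    ⟨⌈r⌉₊, Nat.le_ceil r, by linarith [Nat.ceil_lt_add_one (show 0 ≤ r by linarith)]⟩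
  have hq : 0 < q := by exact_mod_cast (by linarith : (0 : ℝ) < q)
  have hnq : n ≤ q ^ 3 := by
    have : (n : ℝ) ≤ (q : ℝ) ^ 3 := by
      rw [← hr3]
      gcongr
    exact_mod_cast this
  refine ⟨(digitSet q).image (fun x : ℕ => (x : ZMod n)), ?_, ?_⟩
  · have hc : ((((digitSet q).image (fun x : ℕ => (x : ZMod n))).card : ℕ) : ℝ)
        ≤ 7 * (q : ℝ) ^ 2 := by
      exact_mod_cast Finset.card_image_le.trans (card_digitSet_le q)
    have hq2 : (q : ℝ) ^ 2 ≤ (2 * r) ^ 2 := by gcongr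
    have hl := half_le_log_rpow hn
    rw [hr2]
    nlinarith [mul_le_mul_of_nonneg_left hl (sq_nonneg r)]
  · intro k1 k2 k3 hk
    obtain ⟨i, hi, hi1, hi2⟩ :=
      exists_shift_mem_digitSet hq (a := k1) (b := k1 + k2) (by omega) (by omega)
    exact ⟨(i : ZMod n), Finset.mem_image_of_mem _ hi,
      Finset.mem_image.2 ⟨_, hi1, by push_cast; rfl⟩,
      Finset.mem_image.2 ⟨_, hi2, by push_cast; ring⟩⟩
end

section
/- There is an absolute constant C > 0 such that for every integer n ≥ 3 there exists a family E of chords of the n-gon with |E| ≤ C · n^(4/3) · (log n)^(2/3) such that for every triple (k1, k2, k3) of nonnegative integers with k1 + k2 + k3 = n − 3, there exists a ∈ ZMod n at which E realizes the gap type (k1, k2, k3). -/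
/-!
It suffices to find a set `S` of `O(n^(2/3))` vertices such that for all `x, y < n` some `a` has
`a`, `a + x`, `a + y` all in `S`: the chords with both ends in `S` then realize every gap type, and
there are `O(n^(4/3))` of them, which is enough because `log n ≥ 1` for `n ≥ 3`.

Let `m = ⌈n^(1/3)⌉` and let `S` be the set of residues mod `n` of the integers `z < 2 m^3` having
at least one of their three lowest base-`m` digits equal to `0`; it has at most `6 m^2` elements.
Given `x, y`, look for `a = i m + j m^2` with `i, j < m`. Its digit `0` vanishes. No carry enters
digit `1` of `a + x`, so a suitable `i` makes that digit vanish; once `i` is fixed, the carry into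
digit `2` of `a + y` does not depend on `j`, so a suitable `j` makes that digit vanish.
-/

/-- A family `E` of chords of the `n`-gon (vertices identified with `ZMod n`) realizes the
gap type `(k1, k2, k3)` at the vertex `a` if the three chords of the corresponding triangle
all belong to `E`. -/
def RealizesGapType (n : ℕ) (E : Finset (Sym2 (ZMod n))) (k1 k2 k3 : ℕ) (a : ZMod n) : Prop :=
  s(a, a + (k1 : ZMod n) + 1) ∈ E ∧
  s(a + (k1 : ZMod n) + 1, a + (k1 : ZMod n) + (k2 : ZMod n) + 2) ∈ E ∧
  s(a + (k1 : ZMod n) + (k2 : ZMod n) + 2, a) ∈ E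

/-- The `t`-th natural number whose base-`m` digit at position `d` is `0`: the digit `0` is
inserted into the expansion of `t` at position `d`. -/
def insertZeroDigit (m d t : ℕ) : ℕ := t % m ^ d + t / m ^ d * m ^ (d + 1)

/-- The residues mod `n` of the numbers below `2 m^3` with a zero among their three lowest
base-`m` digits. -/
def zeroDigitSet (n m : ℕ) : Finset (ZMod n) :=
  (Finset.range 3).biUnion fun d =>
    (Finset.range (2 * m ^ 2)).image fun t => (insertZeroDigit m d t : ZMod n)

lemma card_zeroDigitSet_le (n m : ℕ) : (zeroDigitSet n m).card ≤ 6 * m ^ 2 := by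
  have h := Finset.card_biUnion_le_card_mul (Finset.range 3)
    (fun d => (Finset.range (2 * m ^ 2)).image fun t => (insertZeroDigit m d t : ZMod n))
    (2 * m ^ 2) (fun d _ => Finset.card_image_le.trans (by simp))
  rw [Finset.card_range] at h
  unfold zeroDigitSet
  linarith

lemma mem_zeroDigitSet {n m d z : ℕ} (hm : 0 < m) (hd : d < 3) (hz : z < 2 * m ^ 3)
    (hdig : z / m ^ d % m = 0) : (z : ZMod n) ∈ zeroDigitSet n m := by
  obtain ⟨q, hq⟩ := Nat.dvd_of_mod_eq_zero hdig
  have hpos : 0 < m ^ d := by positivity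
  have hr : z % m ^ d < m ^ d := Nat.mod_lt _ hpos
  have hzeq : z = z % m ^ d + m ^ (d + 1) * q := by
    conv_lhs => rw [← Nat.mod_add_div z (m ^ d), hq]
    ring
  -- deleting the zero digit of `z` leaves `t = z % m ^ d + m ^ d * q`
  have ht : insertZeroDigit m d (z % m ^ d + m ^ d * q) = z := by
    unfold insertZeroDigit
    rw [Nat.add_mul_mod_self_left, Nat.mod_mod, Nat.add_mul_div_left _ _ hpos,
      Nat.div_eq_of_lt hr, zero_add, mul_comm q]
    exact hzeq.symm
  have hlt : z % m ^ d + m ^ d * q < 2 * m ^ 2 := by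
    have hsplit : m ^ 2 = m ^ d * m ^ (2 - d) := by rw [← pow_add]; congr 1; omega
    have hsplit' : m ^ 3 = m ^ (d + 1) * m ^ (2 - d) := by rw [← pow_add]; congr 1; omega
    have hq2 : q < 2 * m ^ (2 - d) := by
      by_contra! hcon
      have := Nat.mul_le_mul_left (m ^ (d + 1)) hcon
      have hle : m ^ (d + 1) * q ≤ z := (Nat.le_add_left _ _).trans_eq hzeq.symm
      rw [mul_left_comm, ← hsplit'] at this
      exact absurd (this.trans hle) (not_le.2 hz)
    have := Nat.mul_le_mul_left (m ^ d) (Nat.succ_le_of_lt hq2)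
    rw [hsplit]
    rw [Nat.succ_eq_add_one] at this
    nlinarith
  unfold zeroDigitSet
  simp only [Finset.mem_biUnion, Finset.mem_image, Finset.mem_range]
  exact ⟨d, hd, _, hlt, by rw [ht]⟩

lemma exists_lt_add_mod_eq_zero {m : ℕ} (hm : 0 < m) (v : ℕ) : ∃ i < m, (i + v) % m = 0 := by
  refine ⟨(m - v % m) % m, Nat.mod_lt _ hm, ?_⟩
  have := Nat.mod_lt v hm
  rw [Nat.mod_add_mod, ← Nat.add_mod_mod, Nat.sub_add_cancel this.le, Nat.mod_self]

/-- `zeroDigitSet n m` contains a translate of every three-point pattern `{0, x, y}`. -/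
lemma exists_translate_mem {n m x y : ℕ} (hm : 0 < m) (hx : x < m ^ 3) (hy : y < m ^ 3) :
    ∃ a : ℕ, (a : ZMod n) ∈ zeroDigitSet n m ∧ ((a + x : ℕ) : ZMod n) ∈ zeroDigitSet n m ∧
      ((a + y : ℕ) : ZMod n) ∈ zeroDigitSet n m := by
  obtain ⟨i, hi, hi0⟩ := exists_lt_add_mod_eq_zero hm (x / m)
  obtain ⟨j, hj, hj0⟩ := exists_lt_add_mod_eq_zero hm ((i * m + y) / m ^ 2)
  have ha : i * m + j * m ^ 2 < m ^ 3 := by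
    have h1 : (i + 1) * m ≤ m * m := Nat.mul_le_mul_right _ hi
    have h2 : (j + 1) * m ^ 2 ≤ m * m ^ 2 := Nat.mul_le_mul_right _ hj
    nlinarith
  refine ⟨i * m + j * m ^ 2, mem_zeroDigitSet (d := 0) hm (by norm_num) (by omega) ?_,
    mem_zeroDigitSet (d := 1) hm (by norm_num) (by omega) ?_,
    mem_zeroDigitSet (d := 2) hm (by norm_num) (by omega) ?_⟩
  · rw [pow_zero, Nat.div_one, show i * m + j * m ^ 2 = m * (i + j * m) by ring]
    exact Nat.mul_mod_right _ _
  · rw [pow_one, show i * m + j * m ^ 2 + x = x + m * (i + m * j) by ring,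
      Nat.add_mul_div_left _ _ hm, ← add_assoc, Nat.add_mul_mod_self_left, add_comm]
    exact hi0
  · rw [show i * m + j * m ^ 2 + y = (i * m + y) + m ^ 2 * j by ring,
      Nat.add_mul_div_left _ _ (by positivity), add_comm]
    exact hj0

lemma natCast_zmod_ne_zero {n k : ℕ} (h0 : 0 < k) (hk : k < n) : (k : ZMod n) ≠ 0 := by
  rw [Ne, ZMod.natCast_eq_zero_iff]
  exact Nat.not_dvd_of_pos_of_lt h0 hk

/-- There is an absolute constant `C > 0` such that for every `n ≥ 3` there is a family `E`
of chords of the `n`-gon, of size at most `C * n^(4/3) * (log n)^(2/3)`, realizing every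
gap type `(k1, k2, k3)` with `k1 + k2 + k3 = n - 3` at some vertex. -/
theorem universal_triangle_types_upper_bound :
    ∃ C : ℝ, 0 < C ∧ ∀ n : ℕ, 3 ≤ n →
      ∃ E : Finset (Sym2 (ZMod n)),
        (∀ e ∈ E, ¬ e.IsDiag) ∧
        (E.card : ℝ) ≤ C * (n : ℝ) ^ ((4 : ℝ) / 3) * (Real.log n) ^ ((2 : ℝ) / 3) ∧
        ∀ k1 k2 k3 : ℕ, k1 + k2 + k3 = n - 3 →
          ∃ a : ZMod n, RealizesGapType n E k1 k2 k3 a := by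
  classical
  -- `m ≤ 2 n^(1/3)`, hence `|E| ≤ (6 m^2)^2 ≤ 576 n^(4/3)`
  refine ⟨576, by norm_num, fun n hn => ?_⟩
  have hn1 : (1 : ℝ) ≤ n := by exact_mod_cast (by omega : 1 ≤ n)
  set r : ℝ := (n : ℝ) ^ ((1 : ℝ) / 3) with hr
  have hr1 : 1 ≤ r := Real.one_le_rpow hn1 (by norm_num)
  have hr3 : r ^ 3 = n := by
    rw [hr, ← Real.rpow_natCast, ← Real.rpow_mul (by linarith)]; norm_num
  have hr4 : r ^ 4 = (n : ℝ) ^ ((4 : ℝ) / 3) := by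
    rw [hr, ← Real.rpow_natCast, ← Real.rpow_mul (by linarith)]; norm_num
  set m : ℕ := ⌈r⌉₊ with hm
  have hrm : r ≤ m := Nat.le_ceil r
  have hm2 : (m : ℝ) ≤ 2 * r := by
    have := Nat.ceil_lt_add_one (a := r) (by linarith)
    linarith
  have hm0 : 0 < m := Nat.ceil_pos.2 (by linarith)
  have hnm : n ≤ m ^ 3 := by
    have : (n : ℝ) ≤ (m : ℝ) ^ 3 := by rw [← hr3]; gcongr
    exact_mod_cast this
  let S := zeroDigitSet n m
  refine ⟨((S ×ˢ S).image fun p => s(p.1, p.2)).filter fun e => ¬ e.IsDiag,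
    fun e he => (Finset.mem_filter.1 he).2, ?_, fun k1 k2 k3 hk => ?_⟩
  · have hcard : (((S ×ˢ S).image fun p => s(p.1, p.2)).filter fun e => ¬ e.IsDiag).card
        ≤ (6 * m ^ 2) * (6 * m ^ 2) := by
      refine (Finset.card_filter_le _ _).trans (Finset.card_image_le.trans ?_)
      rw [Finset.card_product]
      exact Nat.mul_le_mul (card_zeroDigitSet_le n m) (card_zeroDigitSet_le n m)
    have hlog : 1 ≤ Real.log n ^ ((2 : ℝ) / 3) := by
      refine Real.one_le_rpow ?_ (by norm_num)
      rw [Real.le_log_iff_exp_le (by linarith)]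
      have h3 : (3 : ℝ) ≤ n := by exact_mod_cast hn
      linarith [Real.exp_one_lt_d9]
    have hm4 : (m : ℝ) ^ 4 ≤ (2 * r) ^ 4 := by gcongr
    calc _ ≤ (((6 * m ^ 2) * (6 * m ^ 2) : ℕ) : ℝ) := by exact_mod_cast hcard
      _ = 36 * (m : ℝ) ^ 4 := by push_cast; ring
      _ ≤ 36 * (2 * r) ^ 4 := by linarith
      _ = 576 * (n : ℝ) ^ ((4 : ℝ) / 3) := by rw [← hr4]; ring
      _ ≤ _ := le_mul_of_one_le_right (by positivity) hlog
  · obtain ⟨a, ha, hax, hay⟩ := exists_translate_mem (n := n) (x := k1 + 1) (y := k1 + k2 + 2)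
      hm0 (by omega) (by omega)
    have hmem : ∀ {u v : ZMod n}, u ∈ S → v ∈ S → u ≠ v →
        s(u, v) ∈ ((S ×ˢ S).image fun p => s(p.1, p.2)).filter fun e => ¬ e.IsDiag := by
      intro u v hu hv huv
      refine Finset.mem_filter.2 ⟨Finset.mem_image.2 ⟨(u, v), Finset.mk_mem_product hu hv, rfl⟩, ?_⟩
      simpa using huv
    have hb : ((a + (k1 + 1) : ℕ) : ZMod n) = a + (k1 : ZMod n) + 1 := by push_cast; ring
    have hc : ((a + (k1 + k2 + 2) : ℕ) : ZMod n) = a + (k1 : ZMod n) + (k2 : ZMod n) + 2 := by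
      push_cast; ring
    rw [hb] at hax
    rw [hc] at hay
    have h1 := natCast_zmod_ne_zero (n := n) (k := k1 + 1) (by omega) (by omega)
    have h2 := natCast_zmod_ne_zero (n := n) (k := k2 + 1) (by omega) (by omega)
    have h3 := natCast_zmod_ne_zero (n := n) (k := k1 + k2 + 2) (by omega) (by omega)
    push_cast at h1 h2 h3
    refine ⟨a, hmem ha hax fun h => h1 ?_, hmem hax hay fun h => h2 ?_, hmem hay ha fun h => h3 ?_⟩
    · linear_combination -h
    · linear_combination -h
    · linear_combination h
end

section
/- There exist a constant c > 0 and an integer N such that for every n ≥ N the following holds: if E is a family of chords of the n-gon such that for every triple (k1, k2, k3) of nonnegative integers with k1 ≤ k2 ≤ k3 and k1 + k2 + k3 = n − 3 there exist a permutation (k1', k2', k3') of (k1, k2, k3) and a ∈ ZMod n at which E realizes the gap type (k1', k2', k3'), then |E| ≥ c · n^(4/3). -/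
open Finset

/-- The ordered triangles of the relation `A`, degenerate ones included. -/
def orderedTriangles {V : Type*} [Fintype V] [DecidableEq V] (A : Finset (V × V)) :
    Finset ((V × V) × V) :=
  (A ×ˢ univ).filter fun t => (t.1.2, t.2) ∈ A ∧ (t.2, t.1.1) ∈ A

/-- Writing `c(x, y)` for the number of triangles on the edge `(x, y)`, Cauchy–Schwarz gives
`(∑ c)^2 ≤ |A| * ∑ c^2`, and `∑ c^2 ≤ |A|^2` because two triangles `x y z`, `x y z'` on a common
edge are determined by the pair of edges `(y, z)`, `(z', x)`. -/
lemma card_triangles_sq_le {V : Type*} [Fintype V] [DecidableEq V] (A : Finset (V × V)) :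
    (orderedTriangles A).card ^ 2 ≤ A.card ^ 3 := by
  set C : V × V → Finset V := fun e => univ.filter fun z => (e.2, z) ∈ A ∧ (z, e.1) ∈ A with hC
  have h1 : (orderedTriangles A).card = ∑ e ∈ A, (C e).card := by
    rw [← card_sigma]
    refine card_bij (fun t _ => ⟨t.1, t.2⟩) ?_ ?_ ?_
    · rintro ⟨e, z⟩ h
      simpa [orderedTriangles, hC] using h
    · rintro ⟨e, z⟩ _ ⟨e', z'⟩ _ h
      simpa using h
    · rintro ⟨e, z⟩ h
      exact ⟨(e, z), by simpa [orderedTriangles, hC] using h, rfl⟩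
  have h2 : ∑ e ∈ A, (C e).card ^ 2 ≤ A.card ^ 2 := by
    have h3 : ∑ e ∈ A, (C e).card ^ 2 = (A.sigma fun e => C e ×ˢ C e).card := by
      rw [card_sigma]
      simp [sq]
    rw [h3, sq, ← card_product]
    refine card_le_card_of_injOn (fun p => ((p.1.2, p.2.1), (p.2.2, p.1.1))) ?_ ?_
    · rintro ⟨⟨x, y⟩, z, z'⟩ h
      simp [hC] at h
      simp [h]
    · rintro ⟨⟨x, y⟩, z, z'⟩ _ ⟨⟨x', y'⟩, w, w'⟩ _ h
      simp at h
      obtain ⟨⟨rfl, rfl⟩, rfl, rfl⟩ := h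
      rfl
  calc (orderedTriangles A).card ^ 2 = (∑ e ∈ A, (C e).card) ^ 2 := by rw [h1]
    _ ≤ A.card * ∑ e ∈ A, (C e).card ^ 2 := sq_sum_le_card_mul_sum_sq
    _ ≤ A.card * A.card ^ 2 := Nat.mul_le_mul_left _ h2
    _ = A.card ^ 3 := by ring

/-- Both orientations of every chord in `E`. -/
def orientations {V : Type*} [Fintype V] [DecidableEq V] (E : Finset (Sym2 V)) :
    Finset (V × V) :=
  univ.filter fun p => s(p.1, p.2) ∈ E

lemma card_orientations_le {V : Type*} [Fintype V] [DecidableEq V] (E : Finset (Sym2 V)) :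
    (orientations E).card ≤ 2 * E.card := by
  refine card_le_mul_card_image_of_maps_to (f := fun p : V × V => s(p.1, p.2))
    (fun p hp => by simpa [orientations] using hp) 2 ?_
  intro e _
  induction e using Sym2.ind with
  | _ x y =>
    refine (card_le_card (t := {(x, y), (y, x)}) ?_).trans card_le_two
    rintro ⟨u, v⟩ h
    simp only [mem_filter, Sym2.eq_iff] at h
    simpa using h.2

lemma natCast_inj_of_lt {n a b : ℕ} (ha : a < n) (hb : b < n) (h : (a : ZMod n) = b) : a = b := by
  rw [ZMod.natCast_eq_natCast_iff'] at h
  rwa [Nat.mod_eq_of_lt ha, Nat.mod_eq_of_lt hb] at h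

lemma types_le_triangles {n : ℕ} [NeZero n] (hn : 3 ≤ n) (E : Finset (Sym2 (ZMod n)))
    (hE : ∀ k1 k2 k3 : ℕ, k1 ≤ k2 → k2 ≤ k3 → k1 + k2 + k3 = n - 3 →
      ∃ k1' k2' k3' : ℕ, ({k1', k2', k3'} : Multiset ℕ) = ({k1, k2, k3} : Multiset ℕ) ∧
        ∃ a : ZMod n, RealizesGapType n E k1' k2' k3' a) :
    ((n - 3) / 6) ^ 2 ≤ (orderedTriangles (orientations E)).card := by
  set q := (n - 3) / 6 with hq
  have key : ∀ p : Fin q × Fin q, ∃ k1' k2' k3' : ℕ, ({k1', k2', k3'} : Multiset ℕ) =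
      ({p.1.1, q + p.2.1, n - 3 - p.1.1 - (q + p.2.1)} : Multiset ℕ) ∧
        ∃ a : ZMod n, RealizesGapType n E k1' k2' k3' a := by
    rintro ⟨⟨i, hi⟩, ⟨j, hj⟩⟩
    apply hE <;> simp only <;> omega
  choose k1 k2 k3 hk a ha using key
  have hsum : ∀ p, k1 p + k2 p + k3 p = n - 3 := by
    intro p
    have h := congrArg Multiset.sum (hk p)
    have h1 := p.1.2
    have h2 := p.2.2
    simp at h
    omega
  have hcard : q ^ 2 = (univ : Finset (Fin q × Fin q)).card := by simp [sq]
  rw [hcard]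
  refine card_le_card_of_injOn
    (fun p => ((a p, a p + k1 p + 1), a p + k1 p + k2 p + 2)) ?_ ?_
  · intro p _
    obtain ⟨h1, h2, h3⟩ := ha p
    simp [orderedTriangles, orientations, h1, h2, h3]
  · intro p _ p' _ h
    simp only [Prod.mk.injEq] at h
    obtain ⟨⟨h1, h2⟩, h3⟩ := h
    have s := hsum p
    have s' := hsum p'
    have e1 : k1 p = k1 p' := by
      refine natCast_inj_of_lt (n := n) (by omega) (by omega) ?_
      rw [h1] at h2
      simpa using h2
    have e2 : k2 p = k2 p' := by
      refine natCast_inj_of_lt (n := n) (by omega) (by omega) ?_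
      rw [h1, e1] at h3
      simpa using h3
    have e3 : k3 p = k3 p' := by omega
    have hm := hk p
    rw [e1, e2, e3, hk p'] at hm
    obtain ⟨⟨i, hi⟩, ⟨j, hj⟩⟩ := p
    obtain ⟨⟨i', hi'⟩, ⟨j', hj'⟩⟩ := p'
    simp only at hm
    -- The three gaps of each type lie in `[0, q)`, `[q, 2q)` and `[2q, ∞)` respectively.
    have m1 : i ∈ ({i', q + j', n - 3 - i' - (q + j')} : Multiset ℕ) := by rw [hm]; simp
    have m2 : q + j ∈ ({i', q + j', n - 3 - i' - (q + j')} : Multiset ℕ) := by rw [hm]; simp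
    simp only [Multiset.insert_eq_cons, Multiset.mem_cons, Multiset.mem_singleton] at m1 m2
    have f1 : i = i' := by omega
    have f2 : j = j' := by omega
    subst f1 f2
    rfl

/-- Any family of chords of the `n`-gon realizing all topological types of triangles
(i.e. every gap type `(k1, k2, k3)` with `k1 ≤ k2 ≤ k3` and `k1 + k2 + k3 = n - 3`,
up to permutation of the three gaps) has size at least `c * n^(4/3)` for an absolute
constant `c > 0`, once `n` is large enough. -/
theorem universal_triangle_types_lower_bound :
    ∃ c : ℝ, 0 < c ∧ ∃ N : ℕ, ∀ n : ℕ, N ≤ n →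
      ∀ E : Finset (Sym2 (ZMod n)),
        (∀ k1 k2 k3 : ℕ, k1 ≤ k2 → k2 ≤ k3 → k1 + k2 + k3 = n - 3 →
          ∃ k1' k2' k3' : ℕ, ({k1', k2', k3'} : Multiset ℕ) = ({k1, k2, k3} : Multiset ℕ) ∧
            ∃ a : ZMod n, RealizesGapType n E k1' k2' k3' a) →
        c * (n : ℝ) ^ ((4 : ℝ) / 3) ≤ (E.card : ℝ) := by
  refine ⟨1 / 200, by norm_num, 12, fun n hn E hE => ?_⟩
  have : NeZero n := ⟨by omega⟩
  have h1 := types_le_triangles (by omega) E hE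
  have h2 := card_triangles_sq_le (orientations E)
  have h3 := card_orientations_le E
  have hq : n ≤ 24 * ((n - 3) / 6) := by omega
  have h4 : n ^ 4 ≤ 200 ^ 3 * E.card ^ 3 := by
    calc n ^ 4 ≤ (24 * ((n - 3) / 6)) ^ 4 := Nat.pow_le_pow_left hq 4
      _ = 24 ^ 4 * (((n - 3) / 6) ^ 2) ^ 2 := by ring
      _ ≤ 24 ^ 4 * (orderedTriangles (orientations E)).card ^ 2 := by gcongr
      _ ≤ 24 ^ 4 * (orientations E).card ^ 3 := by gcongr
      _ ≤ 24 ^ 4 * (2 * E.card) ^ 3 := by gcongr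
      _ = (24 ^ 4 * 8) * E.card ^ 3 := by ring
      _ ≤ 200 ^ 3 * E.card ^ 3 := by gcongr; norm_num
  have h5 : ((n : ℝ) ^ ((4 : ℝ) / 3)) ^ 3 ≤ (200 * (E.card : ℝ)) ^ 3 := by
    have e : ((n : ℝ) ^ ((4 : ℝ) / 3)) ^ 3 = (n : ℝ) ^ 4 := by
      rw [← Real.rpow_natCast, ← Real.rpow_mul (Nat.cast_nonneg n), ← Real.rpow_natCast]
      norm_num
    rw [e, mul_pow]
    exact_mod_cast h4
  have h6 := le_of_pow_le_pow_left₀ (by norm_num) (by positivity) h5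
  linarith
end

section
/- For every real ε > 0 there exists a constant c > 0 such that for all integers n ≥ 4 the following holds: if E is a family of diagonals of the n-gon such that for every triangulation T of the n-gon there exists a dihedral symmetry σ of ZMod n with σ(d) ∈ E for every diagonal d of T, then |E| ≥ c · n^(2−ε). -/
/-!
The argument counts vertices of large degree.  Fix `k` with `1 / k < ε`.  Cut the polygon into `k`
consecutive arcs of `m ≈ n / k` sides, pick an arbitrary interior vertex `h i` (a *hub*) in each
arc, join it to all vertices of its arc, and triangulate the rest arbitrarily
(`exists_isTri_hubs`).  In the image of such a triangulation under a symmetry, every hub lands on a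
vertex of degree at least `m - 2` in `E`; let `D` be the set of these vertices.  There are
`(m - 1) ^ k` choices of hubs, and each is determined by the symmetry (`2 n` possibilities) together
with the images of the hubs, so `(m - 1) ^ k ≤ 2 n |D| ^ k`.  Double counting gives
`|D| (m - 2) ≤ 2 |E|`.  Hence `(m - 2) ^ (2 k) ≤ 2 n (2 |E|) ^ k` (`key_count`), which is
`|E| ≥ c n ^ (2 - 1 / k)` after taking `k`-th roots.

Triangulations are built on intervals of natural numbers by the inductive predicate `IsTri` and then
transported to `ZMod n` (`IsTri.isPolygonTriangulation`).
-/

/-- A diagonal of the `n`-gon (vertices identified with `ZMod n` in cyclic order) is an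
unordered pair `{a, b}` with `b ∉ {a - 1, a, a + 1}`. -/
def IsDiagonal (n : ℕ) (d : Sym2 (ZMod n)) : Prop :=
  ∃ a b : ZMod n, d = s(a, b) ∧ b ≠ a - 1 ∧ b ≠ a ∧ b ≠ a + 1

/-- `y` lies strictly inside the open cyclic arc from `x` to `z` (going in the positive
direction) in `ZMod n`. -/
def BtwArc (n : ℕ) (x y z : ZMod n) : Prop :=
  0 < (y - x).val ∧ (y - x).val < (z - x).val

/-- Two chords of the `n`-gon cross if their endpoint pairs separate each other on the
circle: one endpoint of the second chord lies strictly in the open arc from `a` to `b`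
and the other lies strictly in the open arc from `b` to `a`. -/
def Crosses (n : ℕ) (d d' : Sym2 (ZMod n)) : Prop :=
  ∃ a b c e : ZMod n, d = s(a, b) ∧ d' = s(c, e) ∧ BtwArc n a c b ∧ BtwArc n b e a

/-- A triangulation of the `n`-gon is a set of `n - 3` pairwise noncrossing diagonals. -/
def IsPolygonTriangulation (n : ℕ) (T : Finset (Sym2 (ZMod n))) : Prop :=
  T.card = n - 3 ∧ (∀ d ∈ T, IsDiagonal n d) ∧ ∀ d ∈ T, ∀ d' ∈ T, ¬ Crosses n d d'

/-- A dihedral symmetry of `ZMod n`: a map `x ↦ x + t` or `x ↦ t - x`. -/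
def IsDihedralSymmetry (n : ℕ) (σ : ZMod n → ZMod n) : Prop :=
  (∃ t : ZMod n, σ = fun x => x + t) ∨ (∃ t : ZMod n, σ = fun x => t - x)

/-- `IsTri a b S`: `S` is the set of pairs `(x, y)`, `y ≥ x + 2`, that occur in some triangulation
of the polygon with consecutive vertices `a, a + 1, …, b`.  The base side `(a, b)` is a member of
`S` (unless `b = a + 1`), the other sides are not. -/
inductive IsTri : ℕ → ℕ → Finset (ℕ × ℕ) → Prop
  | edge (a : ℕ) : IsTri a (a + 1) ∅
  | glue {a m b : ℕ} {S S' : Finset (ℕ × ℕ)} : IsTri a m S → IsTri m b S' →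
      IsTri a b (insert (a, b) (S ∪ S'))

namespace IsTri

lemma lt {a b : ℕ} {S : Finset (ℕ × ℕ)} (h : IsTri a b S) : a < b := by
  induction h <;> omega

lemma bounds {a b : ℕ} {S : Finset (ℕ × ℕ)} (h : IsTri a b S) :
    ∀ p ∈ S, a ≤ p.1 ∧ p.1 + 2 ≤ p.2 ∧ p.2 ≤ b := by
  induction h with
  | edge a => simp
  | glue h1 h2 ih1 ih2 =>
    have := h1.lt
    have := h2.lt
    intro p hp
    rw [Finset.mem_insert, Finset.mem_union] at hp
    rcases hp with rfl | hp | hp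
    · simp; omega
    · have := ih1 p hp; omega
    · have := ih2 p hp; omega

lemma base_mem {a b : ℕ} {S : Finset (ℕ × ℕ)} (h : IsTri a b S) (hab : a + 2 ≤ b) :
    (a, b) ∈ S := by
  cases h with
  | edge => omega
  | glue => exact Finset.mem_insert_self _ _

lemma card {a b : ℕ} {S : Finset (ℕ × ℕ)} (h : IsTri a b S) : S.card + a + 1 = b := by
  induction h with
  | edge a => simp
  | @glue a m b S S' h1 h2 ih1 ih2 =>
    have l1 := h1.lt
    have l2 := h2.lt
    have hd : Disjoint S S' := by
      rw [Finset.disjoint_left]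
      intro p hp hp'
      have := h1.bounds p hp
      have := h2.bounds p hp'
      omega
    have hn : (a, b) ∉ S ∪ S' := by
      rw [Finset.mem_union]
      rintro (hp | hp)
      · have := h1.bounds _ hp; simp at this; omega
      · have := h2.bounds _ hp; simp at this; omega
    rw [Finset.card_insert_of_notMem hn, Finset.card_union_of_disjoint hd]
    omega

lemma noncrossing {a b : ℕ} {S : Finset (ℕ × ℕ)} (h : IsTri a b S) :
    ∀ p ∈ S, ∀ q ∈ S, ¬ (p.1 < q.1 ∧ q.1 < p.2 ∧ p.2 < q.2) := by
  induction h with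
  | edge a => simp
  | glue h1 h2 ih1 ih2 =>
    have l1 := h1.lt
    have l2 := h2.lt
    intro p hp q hq
    rw [Finset.mem_insert, Finset.mem_union] at hp hq
    rcases hp with rfl | hp | hp <;> rcases hq with rfl | hq | hq
    · simp
    · have := h1.bounds q hq; simp; omega
    · have := h2.bounds q hq; simp; omega
    · have := h1.bounds p hp; simp; omega
    · exact ih1 p hp q hq
    · have := h1.bounds p hp; have := h2.bounds q hq; omega
    · have := h2.bounds p hp; simp; omega
    · have := h1.bounds q hq; have := h2.bounds p hp; omega
    · exact ih2 p hp q hq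

end IsTri

/-- The triangulation of `a, …, h` in which all vertices are joined to `h`. -/
lemma exists_isTri_fan_right {a h : ℕ} (hah : a < h) :
    ∃ S, IsTri a h S ∧ ∀ y, a ≤ y → y + 2 ≤ h → (y, h) ∈ S := by
  obtain ⟨d, rfl⟩ := Nat.exists_eq_add_of_lt hah
  induction d generalizing a with
  | zero => exact ⟨∅, .edge a, fun y h1 h2 => by omega⟩
  | succ d ih =>
    obtain ⟨S, hS, hm⟩ := ih (a := a + 1) (by omega)
    have e : a + 1 + d + 1 = a + (d + 1) + 1 := by omega
    rw [e] at hS hm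
    refine ⟨_, .glue (.edge a) hS, fun y h1 h2 => ?_⟩
    rcases h1.eq_or_lt with rfl | h1
    · simp
    · simp [hm y h1 h2]

/-- The triangulation of `h, …, b` in which all vertices are joined to `h`. -/
lemma exists_isTri_fan_left {h b : ℕ} (hhb : h < b) :
    ∃ S, IsTri h b S ∧ ∀ y, y ≤ b → h + 2 ≤ y → (h, y) ∈ S := by
  obtain ⟨d, rfl⟩ := Nat.exists_eq_add_of_lt hhb
  induction d with
  | zero => exact ⟨∅, .edge h, fun y h1 h2 => by omega⟩
  | succ d ih =>
    obtain ⟨S, hS, hm⟩ := ih (by omega)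
    refine ⟨_, .glue hS (.edge _), fun y h1 h2 => ?_⟩
    rcases h1.eq_or_lt with rfl | h1
    · simp [Nat.add_assoc]
    · simp [hm y (by omega) h2]

/-- Hubs `h i` chosen arbitrarily inside the arcs `[1 + i m, 1 + (i + 1) m]`, `i < k`, can be joined
simultaneously to all vertices of their arcs. -/
lemma exists_isTri_hubs (m k : ℕ) (h : ℕ → ℕ)
    (hh : ∀ i < k, 1 + i * m < h i ∧ h i < 1 + (i + 1) * m) :
    ∃ S, IsTri 0 (1 + k * m) S ∧ ∀ i < k, ∀ y, 1 + i * m ≤ y → y ≤ 1 + (i + 1) * m →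
      (y + 2 ≤ h i → (y, h i) ∈ S) ∧ (h i + 2 ≤ y → (h i, y) ∈ S) := by
  induction k with
  | zero => exact ⟨∅, by simpa using IsTri.edge 0, fun i hi => by omega⟩
  | succ k ih =>
    obtain ⟨S, hS, hm⟩ := ih (fun i hi => hh i (by omega))
    obtain ⟨h1, h2⟩ := hh k (by omega)
    obtain ⟨S1, hS1, hm1⟩ := exists_isTri_fan_right h1
    obtain ⟨S2, hS2, hm2⟩ := exists_isTri_fan_left h2
    refine ⟨_, .glue hS (.glue hS1 hS2), fun i hi y hy1 hy2 => ?_⟩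
    rcases (Nat.lt_succ_iff.1 hi).eq_or_lt with rfl | hi
    · exact ⟨fun hy => by simp [hm1 y hy1 hy], fun hy => by simp [hm2 y hy2 hy]⟩
    · obtain ⟨q1, q2⟩ := hm i hi y hy1 hy2
      exact ⟨fun hy => by simp [q1 hy], fun hy => by simp [q2 hy]⟩

lemma val_natCast_sub {n x y : ℕ} (hx : x < n) (hy : y < n) :
    ((y : ZMod n) - (x : ZMod n)).val = if x ≤ y then y - x else n + y - x := by
  split_ifs with hxy
  · rw [← Nat.cast_sub hxy, ZMod.val_natCast, Nat.mod_eq_of_lt (by omega)]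
  · have : ((y : ZMod n) - (x : ZMod n)) = ((n + y - x : ℕ) : ZMod n) := by
      rw [Nat.cast_sub (by omega)]; simp
    rw [this, ZMod.val_natCast, Nat.mod_eq_of_lt (by omega)]

lemma natCast_eq_iff {n x y : ℕ} (hx : x < n) (hy : y < n) :
    (x : ZMod n) = (y : ZMod n) ↔ x = y := by
  rw [ZMod.natCast_eq_natCast_iff', Nat.mod_eq_of_lt hx, Nat.mod_eq_of_lt hy]

lemma not_crosses_natCast {n a b c d : ℕ} (hab : a < b) (hb : b < n) (hcd : c < d) (hd : d < n)
    (h1 : ¬ (a < c ∧ c < b ∧ b < d)) (h2 : ¬ (c < a ∧ a < d ∧ d < b)) :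
    ¬ Crosses n s((a : ZMod n), (b : ZMod n)) s((c : ZMod n), (d : ZMod n)) := by
  have ha : a < n := by omega
  have hc : c < n := by omega
  rintro ⟨a', b', c', d', e1, e2, q1, q2⟩
  rw [Sym2.eq_iff] at e1 e2
  unfold BtwArc at q1 q2
  rcases e1 with ⟨rfl, rfl⟩ | ⟨rfl, rfl⟩ <;> rcases e2 with ⟨rfl, rfl⟩ | ⟨rfl, rfl⟩ <;>
    simp only [val_natCast_sub, ha, hb, hc, hd] at q1 q2 <;>
    split_ifs at q1 q2 <;> omega

/-- The diagonals of the `n`-gon given by a set of pairs of naturals; `(0, n - 1)` is removed since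
it is a side of the `n`-gon. -/
def toDiagonals (n : ℕ) (S : Finset (ℕ × ℕ)) : Finset (Sym2 (ZMod n)) :=
  (S.erase (0, n - 1)).image fun p => s((p.1 : ZMod n), (p.2 : ZMod n))

lemma IsTri.isPolygonTriangulation {n : ℕ} (hn : 4 ≤ n) {S : Finset (ℕ × ℕ)}
    (hS : IsTri 0 (n - 1) S) : IsPolygonTriangulation n (toDiagonals n S) := by
  have hb := hS.bounds
  refine ⟨?_, ?_, ?_⟩
  · have hi : Set.InjOn (fun p : ℕ × ℕ => s((p.1 : ZMod n), (p.2 : ZMod n)))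
        (S.erase (0, n - 1)) := by
      intro p hp q hq hpq
      have bp := hb p (Finset.mem_of_mem_erase hp)
      have bq := hb q (Finset.mem_of_mem_erase hq)
      simp only [Sym2.eq_iff] at hpq
      rw [natCast_eq_iff (by omega) (by omega), natCast_eq_iff (by omega) (by omega),
        natCast_eq_iff (by omega) (by omega), natCast_eq_iff (by omega) (by omega)] at hpq
      ext <;> omega
    rw [toDiagonals, Finset.card_image_of_injOn hi,
      Finset.card_erase_of_mem (hS.base_mem (by omega))]
    have := hS.card
    omega
  · intro d hd
    obtain ⟨p, hp, rfl⟩ := Finset.mem_image.1 hd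
    obtain ⟨hne, hp⟩ := Finset.mem_erase.1 hp
    have bp := hb p hp
    have hne : ¬ (p.1 = 0 ∧ p.2 = n - 1) := fun h => hne (Prod.ext h.1 h.2)
    refine ⟨p.1, p.2, rfl, ?_, ?_, ?_⟩
    · intro h
      have h : ((p.2 + 1 : ℕ) : ZMod n) = (p.1 : ZMod n) := by push_cast; rw [h]; ring
      rw [ZMod.natCast_eq_natCast_iff', Nat.mod_eq_of_lt (a := p.1) (by omega)] at h
      rcases (show p.2 + 1 ≤ n by omega).eq_or_lt with h' | h'
      · rw [h', Nat.mod_self] at h; omega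
      · rw [Nat.mod_eq_of_lt h'] at h; omega
    · rw [Ne, natCast_eq_iff (by omega) (by omega)]; omega
    · have := natCast_eq_iff (n := n) (x := p.2) (y := p.1 + 1) (by omega) (by omega)
      push_cast at this
      rw [Ne, this]; omega
  · intro d hd d' hd'
    obtain ⟨p, hp, rfl⟩ := Finset.mem_image.1 hd
    obtain ⟨q, hq, rfl⟩ := Finset.mem_image.1 hd'
    have hp := Finset.mem_of_mem_erase hp
    have hq := Finset.mem_of_mem_erase hq
    have bp := hb p hp
    have bq := hb q hq
    exact not_crosses_natCast (by omega) (by omega) (by omega) (by omega)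
      (hS.noncrossing p hp q hq) (hS.noncrossing q hq p hp)

/-- `E` contains a dihedral image of every triangulation of the `n`-gon. -/
def IsUniversal (n : ℕ) (E : Finset (Sym2 (ZMod n))) : Prop :=
  ∀ T : Finset (Sym2 (ZMod n)), IsPolygonTriangulation n T →
    ∃ σ : ZMod n → ZMod n, IsDihedralSymmetry n σ ∧ ∀ d ∈ T, Sym2.map σ d ∈ E

lemma IsUniversal.card_pos {n : ℕ} (hn : 4 ≤ n) {E : Finset (Sym2 (ZMod n))}
    (hE : IsUniversal n E) : 0 < E.card := by
  obtain ⟨S, hS, -⟩ := exists_isTri_fan_left (h := 0) (b := n - 1) (by omega)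
  have hT := hS.isPolygonTriangulation hn
  obtain ⟨σ, -, hσ⟩ := hE _ hT
  have hpos : 0 < (toDiagonals n S).card := by rw [hT.1]; omega
  obtain ⟨d, hd⟩ := Finset.card_pos.1 hpos
  exact Finset.card_pos.2 ⟨_, hσ d hd⟩

/-- The dihedral symmetry with parameters `(b, t)`: a rotation if `b`, a reflection otherwise. -/
def dihedralMap (n : ℕ) (s : Bool × ZMod n) (x : ZMod n) : ZMod n :=
  if s.1 then x + s.2 else s.2 - x

lemma dihedralMap_injective (n : ℕ) (s : Bool × ZMod n) :
    Function.Injective (dihedralMap n s) := by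
  intro x y h
  unfold dihedralMap at h
  split_ifs at h
  · exact add_right_cancel h
  · exact sub_right_injective h

lemma IsDihedralSymmetry.exists_eq {n : ℕ} {σ : ZMod n → ZMod n} (h : IsDihedralSymmetry n σ) :
    ∃ s, σ = dihedralMap n s := by
  rcases h with ⟨t, rfl⟩ | ⟨t, rfl⟩
  · exact ⟨(true, t), by funext x; simp [dihedralMap]⟩
  · exact ⟨(false, t), by funext x; simp [dihedralMap]⟩

open Classical in
/-- The vertices of degree at least `m - 2` in the graph `E`. -/
noncomputable def heavy (n m : ℕ) [NeZero n] (E : Finset (Sym2 (ZMod n))) : Finset (ZMod n) :=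
  Finset.univ.filter fun v => m - 2 ≤ (E.filter fun d => v ∈ d).card

lemma heavy_card_mul_le {n m : ℕ} [NeZero n] (E : Finset (Sym2 (ZMod n))) :
    (heavy n m E).card * (m - 2) ≤ E.card * 2 := by
  classical
  refine Finset.card_mul_le_card_mul (fun v d => v ∈ d) (fun v hv => ?_) (fun d hd => ?_)
  · have := (Finset.mem_filter.1 hv).2
    rw [Finset.bipartiteAbove]
    convert this
  · induction d with | _ a b => ?_
    refine le_trans (Finset.card_le_card (t := {a, b}) fun v hv => ?_) Finset.card_le_two
    simpa using (Finset.mem_filter.1 hv).2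

/-- For every choice of hubs some symmetry sends all of them to heavy vertices. -/
lemma IsUniversal.exists_hubs_heavy {n m k : ℕ} [NeZero n] (hn : 4 ≤ n) (hk : k * m + 3 ≤ n)
    {E : Finset (Sym2 (ZMod n))} (hE : IsUniversal n E) (h : ℕ → ℕ)
    (hh : ∀ i < k, 1 + i * m < h i ∧ h i < 1 + (i + 1) * m) :
    ∃ s, ∀ i < k, dihedralMap n s (h i : ZMod n) ∈ heavy n m E := by
  classical
  obtain ⟨S, hS, hm⟩ := exists_isTri_hubs m k h hh
  obtain ⟨S', hS', -⟩ := exists_isTri_fan_left (h := 1 + k * m) (b := n - 1) (by omega)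
  obtain ⟨σ, hσ, hT⟩ := hE _ ((IsTri.glue hS hS').isPolygonTriangulation hn)
  obtain ⟨s, rfl⟩ := hσ.exists_eq
  refine ⟨s, fun i hi => ?_⟩
  obtain ⟨l1, l2⟩ := hh i hi
  have l3 : (i + 1) * m ≤ k * m := Nat.mul_le_mul_right _ hi
  have l4 : (i + 1) * m = i * m + m := by ring
  simp only [heavy, Finset.mem_filter, Finset.mem_univ, true_and]
  -- the neighbours of the hub: all of its arc, except the hub and the two adjacent vertices
  let N : Finset ℕ := Finset.Icc (1 + i * m) (1 + (i + 1) * m) \ {h i - 1, h i, h i + 1}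
  have hN : m - 2 ≤ N.card := by
    have c1 := Finset.le_card_sdiff {h i - 1, h i, h i + 1}
      (Finset.Icc (1 + i * m) (1 + (i + 1) * m))
    have c2 : ({h i - 1, h i, h i + 1} : Finset ℕ).card ≤ 3 := Finset.card_le_three
    rw [Nat.card_Icc] at c1
    change m - 2 ≤ (Finset.Icc (1 + i * m) (1 + (i + 1) * m) \ {h i - 1, h i, h i + 1}).card
    omega
  refine hN.trans (Finset.card_le_card_of_injOn
    (fun y => Sym2.map (dihedralMap n s) s((h i : ZMod n), (y : ZMod n))) ?_ ?_)
  · intro y hy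
    simp only [N, Finset.coe_sdiff, Set.mem_sdiff, Finset.mem_coe, Finset.mem_Icc,
      Finset.mem_insert, Finset.mem_singleton, not_or] at hy
    obtain ⟨⟨y1, y2⟩, y3, y4, y5⟩ := hy
    obtain ⟨m1, m2⟩ := hm i hi y y1 y2
    refine Finset.mem_coe.2 (Finset.mem_filter.2 ⟨hT _ ?_, by simp⟩)
    rw [toDiagonals, Finset.mem_image]
    rcases Nat.lt_or_ge y (h i) with hlt | hge
    · refine ⟨(y, h i), Finset.mem_erase.2 ⟨?_, ?_⟩, Sym2.eq_swap⟩
      · simp only [ne_eq, Prod.mk.injEq]; omega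
      · simp [m1 (by omega)]
    · refine ⟨(h i, y), Finset.mem_erase.2 ⟨?_, ?_⟩, rfl⟩
      · simp only [ne_eq, Prod.mk.injEq]; omega
      · simp [m2 (by omega)]
  · intro y hy z hz hyz
    simp only [N, Finset.coe_sdiff, Set.mem_sdiff, Finset.mem_coe, Finset.mem_Icc] at hy hz
    have := Sym2.map.injective (dihedralMap_injective n s) hyz
    rw [Sym2.congr_right, natCast_eq_iff (by omega) (by omega)] at this
    exact this

/-- A choice of hubs is recovered from the symmetry and the heavy vertices it is sent to. -/
lemma IsUniversal.pow_le {n m k : ℕ} [NeZero n] (hn : 4 ≤ n) (hk : k * m + 3 ≤ n)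
    {E : Finset (Sym2 (ZMod n))} (hE : IsUniversal n E) :
    (m - 1) ^ k ≤ 2 * n * (heavy n m E).card ^ k := by
  classical
  let hub : (Fin k → Fin (m - 1)) → ℕ → ℕ := fun f i =>
    if hi : i < k then 2 + i * m + f ⟨i, hi⟩ else 0
  have hub_mem : ∀ f, ∀ i < k, 1 + i * m < hub f i ∧ hub f i < 1 + (i + 1) * m := by
    intro f i hi
    have := (f ⟨i, hi⟩).2
    have l4 : (i + 1) * m = i * m + m := by ring
    simp only [hub, hi, dite_true]
    omega
  choose s hs using fun f => hE.exists_hubs_heavy hn hk (hub f) (hub_mem f)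
  let F : (Fin k → Fin (m - 1)) → (Bool × ZMod n) × (Fin k → heavy n m E) := fun f =>
    (s f, fun i => ⟨dihedralMap n (s f) (hub f i : ZMod n), hs f i i.2⟩)
  have hF : Function.Injective F := by
    intro f g hfg
    simp only [F, Prod.mk.injEq] at hfg
    obtain ⟨e1, e2⟩ := hfg
    funext i
    have e3 := congrArg Subtype.val (congrFun e2 i)
    simp only [e1] at e3
    have e4 := dihedralMap_injective n _ e3
    have b1 := hub_mem f i i.2
    have b2 := hub_mem g i i.2
    have l3 : (i.1 + 1) * m ≤ k * m := Nat.mul_le_mul_right _ i.2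
    rw [natCast_eq_iff (by omega) (by omega)] at e4
    simp only [hub, i.2, dite_true] at e4
    exact Fin.ext (by simpa using e4)
  have := Fintype.card_le_of_injective F hF
  simpa [ZMod.card] using this

lemma key_count {n m k : ℕ} (hn : 4 ≤ n) (hk : k * m + 3 ≤ n)
    {E : Finset (Sym2 (ZMod n))} (hE : IsUniversal n E) :
    (m - 2) ^ (2 * k) ≤ 2 * n * (2 * E.card) ^ k := by
  have : NeZero n := ⟨by omega⟩
  calc (m - 2) ^ (2 * k) = (m - 2) ^ k * (m - 2) ^ k := by rw [two_mul, pow_add]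
    _ ≤ (m - 1) ^ k * (m - 2) ^ k := by gcongr; omega
    _ ≤ 2 * n * (heavy n m E).card ^ k * (m - 2) ^ k := by gcongr; exact hE.pow_le hn hk
    _ = 2 * n * ((heavy n m E).card * (m - 2)) ^ k := by rw [mul_pow]; ring
    _ ≤ 2 * n * (2 * E.card) ^ k := by
      have := heavy_card_mul_le (m := m) E
      rw [mul_comm E.card] at this
      gcongr

/-- The bound `|E| ≥ n ^ (2 - 1 / k) / (16 k ^ 2)` for large `n`: the `k`-th root of `key_count`
with `m = ⌊(n - 3) / k⌋`. -/
lemma IsUniversal.sq_le {n k : ℕ} (hk : 0 < k) (hn : 10 * k ≤ n) {E : Finset (Sym2 (ZMod n))}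
    (hE : IsUniversal n E) :
    (n : ℝ) ^ 2 ≤ 16 * (k : ℝ) ^ 2 * E.card * (n : ℝ) ^ ((1 : ℝ) / k) := by
  set m := (n - 3) / k with hm
  have h1 : k * m ≤ n - 3 := Nat.mul_div_le _ _
  have h2 : n - 3 < k * (m + 1) := by
    have := Nat.lt_mul_div_succ (n - 3) hk
    simpa [hm] using this
  have hm2 : 2 ≤ m := by
    by_contra hlt
    have : k * (m + 1) ≤ k * 2 := Nat.mul_le_mul_left _ (by omega)
    omega
  -- `m - 2` is at least `n / (2 k)`
  have h3 : n ≤ 2 * k * (m - 2) := by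
    obtain ⟨q, hq⟩ := Nat.exists_eq_add_of_le hm2
    rw [hq] at h2 ⊢
    have e1 : k * (2 + q + 1) = k * q + 3 * k := by ring
    have e2 : 2 * k * (2 + q - 2) = 2 * (k * q) := by rw [Nat.add_sub_cancel_left]; ring
    rw [e2]
    omega
  have h4 := key_count (n := n) (m := m) (k := k) (by omega) (by omega) hE
  have hroot : ((n : ℝ) ^ ((1 : ℝ) / k)) ^ k = n := by
    rw [one_div, Real.rpow_inv_natCast_pow (by positivity) hk.ne']
  have h5 : ((n : ℝ) ^ 2) ^ k ≤
      (16 * (k : ℝ) ^ 2 * E.card * (n : ℝ) ^ ((1 : ℝ) / k)) ^ k := by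
    have h6 : n ^ (2 * k) ≤ (2 * k) ^ (2 * k) * (2 * n * (2 * E.card) ^ k) := by
      calc n ^ (2 * k) ≤ (2 * k * (m - 2)) ^ (2 * k) := by gcongr
        _ = (2 * k) ^ (2 * k) * (m - 2) ^ (2 * k) := mul_pow _ _ _
        _ ≤ _ := by gcongr
    have h7 : (n : ℝ) ^ (2 * k) ≤ (2 * k) ^ (2 * k) * (2 * n * (2 * E.card) ^ k) := by
      exact_mod_cast h6
    have h8 : (2 : ℝ) ≤ 2 ^ k := by
      simpa using pow_le_pow_right₀ (one_le_two : (1 : ℝ) ≤ 2) (show 1 ≤ k from hk)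
    calc ((n : ℝ) ^ 2) ^ k = (n : ℝ) ^ (2 * k) := by rw [pow_mul]
      _ ≤ (2 * k) ^ (2 * k) * (2 * n * (2 * E.card) ^ k) := h7
      _ ≤ (2 * k) ^ (2 * k) * (2 ^ k * n * (2 * E.card) ^ k) := by gcongr
      _ = (16 * (k : ℝ) ^ 2 * E.card * (n : ℝ) ^ ((1 : ℝ) / k)) ^ k := by
        rw [mul_pow _ ((n : ℝ) ^ ((1 : ℝ) / k)), hroot, pow_mul]
        have : (16 * (k : ℝ) ^ 2 * E.card) = (2 * k) ^ 2 * 2 * (2 * E.card) := by ring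
        rw [this, mul_pow _ (2 * (E.card : ℝ)), mul_pow _ (2 : ℝ)]
        ring
  exact le_of_pow_le_pow_left₀ hk.ne' (by positivity) h5

/-- For every `ε > 0` there is `c > 0` such that for all `n ≥ 4`, any family `E` of
diagonals of the `n`-gon containing a dihedral image of every triangulation of the
`n`-gon has at least `c * n^(2 - ε)` elements. -/
theorem universal_triangulations_lower_bound :
    ∀ ε : ℝ, 0 < ε → ∃ c : ℝ, 0 < c ∧ ∀ n : ℕ, 4 ≤ n →
      ∀ E : Finset (Sym2 (ZMod n)),
        (∀ d ∈ E, IsDiagonal n d) →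
        (∀ T : Finset (Sym2 (ZMod n)), IsPolygonTriangulation n T →
          ∃ σ : ZMod n → ZMod n, IsDihedralSymmetry n σ ∧ ∀ d ∈ T, Sym2.map σ d ∈ E) →
        c * (n : ℝ) ^ ((2 : ℝ) - ε) ≤ (E.card : ℝ) := by
  intro ε hε
  obtain ⟨j, hj⟩ := exists_nat_one_div_lt hε
  obtain ⟨k, hk, hkε⟩ : ∃ k : ℕ, 0 < k ∧ (1 : ℝ) / k ≤ ε :=
    ⟨j + 1, by omega, by push_cast; exact hj.le⟩
  have hkR : (0 : ℝ) < k := by exact_mod_cast hk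
  refine ⟨1 / (100 * (k : ℝ) ^ 2), by positivity, fun n hn E _ hE => ?_⟩
  replace hE : IsUniversal n E := hE
  have hn1 : (1 : ℝ) ≤ n := by exact_mod_cast (by omega : 1 ≤ n)
  have hn0 : (0 : ℝ) < n := by linarith
  rw [one_div, inv_mul_le_iff₀ (by positivity)]
  rcases Nat.lt_or_ge n (10 * k) with hlt | hge
  -- for small `n` it is enough that `E` is nonempty
  · have hE1 : (1 : ℝ) ≤ E.card := by exact_mod_cast hE.card_pos hn
    have hnk : (n : ℝ) ≤ 10 * k := by exact_mod_cast hlt.le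
    calc (n : ℝ) ^ ((2 : ℝ) - ε) ≤ (n : ℝ) ^ (2 : ℝ) :=
          Real.rpow_le_rpow_of_exponent_le hn1 (by linarith)
      _ = (n : ℝ) ^ 2 := Real.rpow_two _
      _ ≤ (10 * k) ^ 2 := by gcongr
      _ = 100 * (k : ℝ) ^ 2 * 1 := by ring
      _ ≤ 100 * (k : ℝ) ^ 2 * E.card := by gcongr
  · calc (n : ℝ) ^ ((2 : ℝ) - ε) ≤ (n : ℝ) ^ ((2 : ℝ) - 1 / k) :=
          Real.rpow_le_rpow_of_exponent_le hn1 (by linarith)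
      _ = (n : ℝ) ^ 2 / (n : ℝ) ^ ((1 : ℝ) / k) := by
          rw [Real.rpow_sub hn0, Real.rpow_two]
      _ ≤ 16 * (k : ℝ) ^ 2 * E.card := by
          rw [div_le_iff₀ (by positivity)]
          exact hE.sq_le hk hge
      _ ≤ 100 * (k : ℝ) ^ 2 * E.card := by gcongr; norm_num
end

section
/- For all integers n and i with 2 ≤ i and 3·i ≤ n, there exists a finite simple graph G that is a tree, in which every vertex has degree 1 or degree 3, which has exactly n vertices of degree 1, and which has at least ⌊n/i⌋ distinct edges e such that one of the two connected components obtained by deleting e from G contains exactly i vertices of degree 1 of G. -/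
/-!
Write `n = i * k + r` with `k = n / i ≥ 3` and `r < i`. The tree is a long spine; to each inner
spine vertex a caterpillar is attached, and both ends of the spine are leaves. Going along the
spine, the attached caterpillars are: `i - 1 + r` single leaves, then `k - 2` caterpillars with
`i` leaves, then `i - 1` single leaves. The edges attaching the `k - 2` big caterpillars cut off
`i` leaves each, and so do two spine edges, one near each end.

The tree is encoded by a parent function, rooted at one end of the spine. If every vertex other
than the root has `0` or `2` children and the root has one child, the graph is a trivalent tree
(`parentGraph_isTree`, `parentGraph_ncard_neighborSet`). Deleting the edge above `v` leaves the
set `S` of descendants of `v` and its complement as components (`reachable_iff_mem_branch`,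
`reachable_root_iff_notMem_branch`), and counting the edges inside `S` by their lower
endpoint shows that the number of leaves in `S` is `(|S| + 1) / 2` (`branch_leaf_count`). So
leaf counts reduce to cardinalities of explicit sets.
-/

/-! ### Rooted trees given by a parent function -/

section ParentGraph

variable {V : Type}

/-- The graph joining every vertex to its parent `p v`. -/
def parentGraph (p : V → V) : SimpleGraph V where
  Adj u v := u ≠ v ∧ (p u = v ∨ p v = u)
  symm := ⟨fun _ _ h => ⟨h.1.symm, h.2.symm⟩⟩
  loopless := ⟨fun _ h => h.1 rfl⟩

/-- `p` is a parent function with root `ρ`: the root is its own parent, and the height `h`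
strictly decreases from every other vertex to its parent. -/
structure IsParent (p : V → V) (ρ : V) (h : V → ℕ) : Prop where
  root : p ρ = ρ
  lt : ∀ v, v ≠ ρ → h (p v) < h v

/-- The children of `v`; the root is not counted as its own child. -/
def children (p : V → V) (ρ v : V) : Set V := {u | u ≠ ρ ∧ p u = v}

/-- `S` is the set of descendants of the non-root vertex `v` (including `v`), characterised by
local conditions: apart from `v`, a non-root vertex lies in `S` exactly when its parent does. -/
structure IsBranch (p : V → V) (ρ v : V) (S : Set V) : Prop where
  mem : v ∈ S
  root : ρ ∉ S
  parent : p v ∉ S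
  iff : ∀ u, u ≠ ρ → u ≠ v → (u ∈ S ↔ p u ∈ S)

variable {p : V → V} {ρ : V} {h : V → ℕ}

lemma IsParent.ne (H : IsParent p ρ h) {v : V} (hv : v ≠ ρ) : v ≠ p v := by
  intro e
  have := H.lt v hv
  rw [← e] at this
  exact lt_irrefl _ this

lemma IsParent.adj (H : IsParent p ρ h) {v : V} (hv : v ≠ ρ) : (parentGraph p).Adj v (p v) :=
  ⟨H.ne hv, Or.inl rfl⟩

lemma IsParent.edge_injOn (H : IsParent p ρ h) :
    Set.InjOn (fun v => s(v, p v)) {v | v ≠ ρ} := by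
  intro u hu v hv e
  have e' : s(u, p u) = s(v, p v) := e
  rw [Sym2.eq_iff] at e'
  rcases e' with ⟨e1, -⟩ | ⟨e1, e2⟩
  · exact e1
  · have h1 := H.lt u hu
    have h2 := H.lt v hv
    rw [e2] at h1
    rw [← e1] at h2
    omega

lemma parentGraph_edgeSet (H : IsParent p ρ h) :
    (parentGraph p).edgeSet = (fun v => s(v, p v)) '' {v | v ≠ ρ} := by
  ext e
  induction e with
  | _ a b =>
    constructor
    · rintro ⟨hab, e | e⟩
      · refine ⟨a, ?_, by simp [e]⟩
        rintro rfl
        exact hab (H.root.symm.trans e)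
      · refine ⟨b, ?_, by simp [e, Sym2.eq_swap]⟩
        rintro rfl
        exact hab (e.symm.trans H.root)
    · rintro ⟨v, hv, e⟩
      rw [← e]
      exact H.adj hv

lemma parentGraph_isTree [Finite V] (H : IsParent p ρ h) : (parentGraph p).IsTree := by
  rw [SimpleGraph.isTree_iff_connected_and_card]
  constructor
  · have key : ∀ m v, h v = m → (parentGraph p).Reachable v ρ := by
      intro m
      induction m using Nat.strong_induction_on with
      | _ m ih =>
        intro v hv
        by_cases hr : v = ρ
        · rw [hr]
        · exact (H.adj hr).reachable.trans (ih _ (hv ▸ H.lt v hr) _ rfl)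
    have : Nonempty V := ⟨ρ⟩
    exact ⟨fun u v => (key _ u rfl).trans (key _ v rfl).symm⟩
  · rw [parentGraph_edgeSet H, Nat.card_coe_set_eq, H.edge_injOn.ncard_image,
      ← Set.ncard_univ]
    have : {v : V | v ≠ ρ} = Set.univ \ {ρ} := by ext; simp
    rw [this]
    exact Set.ncard_sdiff_singleton_add_one (Set.mem_univ _)

lemma parentGraph_neighborSet_root (H : IsParent p ρ h) :
    (parentGraph p).neighborSet ρ = children p ρ ρ := by
  ext u
  constructor
  · rintro ⟨h1, h2 | h2⟩
    · exact absurd (H.root.symm.trans h2) h1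
    · exact ⟨h1.symm, h2⟩
  · rintro ⟨h1, h2⟩
    exact ⟨h1.symm, Or.inr h2⟩

lemma parentGraph_ncard_neighborSet [Finite V] (H : IsParent p ρ h) {v : V} (hv : v ≠ ρ) :
    ((parentGraph p).neighborSet v).ncard = (children p ρ v).ncard + 1 := by
  have : (parentGraph p).neighborSet v = insert (p v) (children p ρ v) := by
    ext u
    constructor
    · rintro ⟨h1, h2 | h2⟩
      · exact Or.inl h2.symm
      · refine Or.inr ⟨?_, h2⟩
        rintro rfl
        exact h1 (h2.symm.trans H.root)
    · rintro (h1 | ⟨h1, h2⟩)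
      · exact h1 ▸ H.adj hv
      · exact h2 ▸ (H.adj h1).symm
  rw [this, Set.ncard_insert_of_notMem]
  rintro ⟨h1, h2⟩
  have h3 := H.lt _ h1
  have h4 := H.lt _ hv
  rw [h2] at h3
  omega

lemma IsBranch.ne_root {v : V} {S : Set V} (B : IsBranch p ρ v S) : v ≠ ρ := by
  rintro rfl
  exact B.root B.mem

/-- No edge of the graph other than the one above `v` leaves the branch at `v`. -/
lemma IsBranch.mem_iff_of_reachable (H : IsParent p ρ h) {v : V} {S : Set V}
    (B : IsBranch p ρ v S) {a b : V}
    (hr : ((parentGraph p).deleteEdges {s(v, p v)}).Reachable a b) : a ∈ S ↔ b ∈ S := by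
  have up : ∀ a b, a ≠ b → p a = b → s(a, b) ≠ s(v, p v) → (a ∈ S ↔ b ∈ S) := by
    rintro a b hab rfl hne
    refine B.iff a ?_ ?_
    · rintro rfl
      exact hab H.root.symm
    · rintro rfl
      exact hne rfl
  obtain ⟨w⟩ := hr
  induction w with
  | nil => rfl
  | cons hadj _ ih =>
    refine Iff.trans ?_ ih
    rw [SimpleGraph.deleteEdges_adj] at hadj
    obtain ⟨⟨hne, e | e⟩, hn⟩ := hadj
    · exact up _ _ hne e hn
    · exact (up _ _ hne.symm e (by rwa [Sym2.eq_swap])).symm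

/-- Climbing one step from a vertex other than `v` and the root avoids the deleted edge. -/
lemma IsParent.adj_delete (H : IsParent p ρ h) {u v : V} (hv : v ≠ ρ) (hu : u ≠ ρ) (huv : u ≠ v) :
    ((parentGraph p).deleteEdges {s(v, p v)}).Adj u (p u) := by
  rw [SimpleGraph.deleteEdges_adj]
  exact ⟨H.adj hu, fun e => huv (H.edge_injOn hu hv e)⟩

lemma reachable_iff_mem_branch (H : IsParent p ρ h) {v : V} {S : Set V}
    (B : IsBranch p ρ v S) (u : V) :
    ((parentGraph p).deleteEdges {s(v, p v)}).Reachable u v ↔ u ∈ S := by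
  constructor
  · intro hr
    exact (B.mem_iff_of_reachable H hr).2 B.mem
  · have key : ∀ m u, h u = m → u ∈ S →
        ((parentGraph p).deleteEdges {s(v, p v)}).Reachable u v := by
      intro m
      induction m using Nat.strong_induction_on with
      | _ m ih =>
        intro u hm hu
        by_cases huv : u = v
        · rw [huv]
        · have hur : u ≠ ρ := fun e => B.root (e ▸ hu)
          exact (H.adj_delete B.ne_root hur huv).reachable.trans
            (ih _ (hm ▸ H.lt u hur) _ rfl ((B.iff u hur huv).1 hu))
    exact key _ u rfl

lemma reachable_root_iff_notMem_branch (H : IsParent p ρ h) {v : V} {S : Set V}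
    (B : IsBranch p ρ v S) (u : V) :
    ((parentGraph p).deleteEdges {s(v, p v)}).Reachable u ρ ↔ u ∉ S := by
  constructor
  · intro hr hu
    exact B.root ((B.mem_iff_of_reachable H hr).1 hu)
  · have key : ∀ m u, h u = m → u ∉ S →
        ((parentGraph p).deleteEdges {s(v, p v)}).Reachable u ρ := by
      intro m
      induction m using Nat.strong_induction_on with
      | _ m ih =>
        intro u hm hu
        by_cases hur : u = ρ
        · rw [hur]
        · have huv : u ≠ v := fun e => hu (e ▸ B.mem)
          exact (H.adj_delete B.ne_root hur huv).reachable.trans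
            (ih _ (hm ▸ H.lt u hur) _ rfl (fun hq => hu ((B.iff u hur huv).2 hq)))
    exact key _ u rfl

/-- Every vertex of the branch except `v` is a child of exactly one vertex of the branch, so
`|S| - 1` is twice the number of inner vertices of `S`. -/
lemma branch_leaf_count [Finite V] (H : IsParent p ρ h) {v : V} {S : Set V}
    (B : IsBranch p ρ v S)
    (hc : ∀ u, u ≠ ρ → (children p ρ u).ncard = 0 ∨ (children p ρ u).ncard = 2) :
    2 * {u | ((parentGraph p).neighborSet u).ncard = 1 ∧ u ∈ S}.ncard = S.ncard + 1 := by
  classical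
  have := Fintype.ofFinite V
  have hleaf : {u | ((parentGraph p).neighborSet u).ncard = 1 ∧ u ∈ S} =
      ↑(S.toFinset.filter fun u => (children p ρ u).ncard = 0) := by
    ext u
    simp only [Set.mem_ofPred_eq, Finset.coe_filter, Set.mem_toFinset]
    constructor
    · rintro ⟨h1, h2⟩
      have hur : u ≠ ρ := fun e => B.root (e ▸ h2)
      rw [parentGraph_ncard_neighborSet H hur] at h1
      exact ⟨h2, by omega⟩
    · rintro ⟨h1, h2⟩
      have hur : u ≠ ρ := fun e => B.root (e ▸ h1)
      rw [parentGraph_ncard_neighborSet H hur]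
      exact ⟨by omega, h1⟩
  have hmaps : ∀ u ∈ S.toFinset.erase v, p u ∈ S.toFinset := by
    intro u hu
    rw [Finset.mem_erase, Set.mem_toFinset] at hu
    rw [Set.mem_toFinset]
    exact (B.iff u (fun e => B.root (e ▸ hu.2)) hu.1).1 hu.2
  have hfib := Finset.card_eq_sum_card_fiberwise (f := p) hmaps
  have hfib2 : ∀ w ∈ S.toFinset,
      ((S.toFinset.erase v).filter fun u => p u = w).card = (children p ρ w).ncard := by
    intro w hw
    rw [← Set.ncard_coe_finset]
    congr 1
    ext u
    simp only [Finset.coe_filter, Finset.mem_erase, Set.mem_toFinset, Set.mem_ofPred_eq,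
      children] at hw ⊢
    constructor
    · rintro ⟨⟨h1, h2⟩, h3⟩
      exact ⟨fun e => B.root (e ▸ h2), h3⟩
    · rintro ⟨h1, rfl⟩
      have huv : u ≠ v := by
        rintro rfl
        exact B.parent hw
      exact ⟨⟨huv, (B.iff u h1 huv).2 hw⟩, rfl⟩
  rw [Finset.sum_congr rfl hfib2] at hfib
  have hsum : ∑ w ∈ S.toFinset, (children p ρ w).ncard =
      ∑ w ∈ S.toFinset, (if (children p ρ w).ncard = 0 then 0 else 2) := by
    refine Finset.sum_congr rfl fun w hw => ?_
    have := hc w (fun e => B.root (e ▸ Set.mem_toFinset.1 hw))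
    split_ifs <;> omega
  rw [hsum, Finset.sum_ite, Finset.sum_const_zero, Finset.sum_const, smul_eq_mul, zero_add,
    Finset.card_erase_of_mem (Set.mem_toFinset.2 B.mem)] at hfib
  have hsplit := Finset.card_filter_add_card_filter_not (s := S.toFinset)
    (fun u => (children p ρ u).ncard = 0)
  have hpos : 0 < S.toFinset.card := Finset.card_pos.2 ⟨v, Set.mem_toFinset.2 B.mem⟩
  rw [hleaf, Set.ncard_coe_finset, Set.ncard_eq_toFinset_card' S]
  omega

end ParentGraph

/-! ### A spine with attached caterpillars -/

section Comb

/-- Vertices `⟨j, l⟩` with `j ≤ L` and `l < s j`. The vertices `⟨j, 0⟩` form the spine, and the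
vertices `⟨j, l⟩` with `1 ≤ l` form the caterpillar attached at `⟨j, 0⟩`. -/
abbrev CombVertex (L : ℕ) (s : ℕ → ℕ) : Type :=
  {x : (_ : ℕ) × ℕ // x ∈ (Finset.range (L + 1)).sigma fun j => Finset.range (s j)}

/-- The parent in coordinates. In an attached caterpillar the odd `l` form its own spine and the
even `l` are leaves; truncated subtraction sends `l = 1` to the spine vertex `l = 0`. -/
def combParentRaw (x : (_ : ℕ) × ℕ) : (_ : ℕ) × ℕ :=
  if x.2 = 0 then ⟨x.1 - 1, 0⟩ else if x.2 % 2 = 0 then ⟨x.1, x.2 - 1⟩ else ⟨x.1, x.2 - 2⟩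

/-- Sizes for which the comb is trivalent: the two ends of the spine carry nothing, and each
inner spine vertex carries a caterpillar with an odd number `s j - 1` of vertices. -/
structure IsCombSize (L : ℕ) (s : ℕ → ℕ) : Prop where
  pos : 0 < L
  first : s 0 = 1
  last : s L = 1
  inner : ∀ j, 0 < j → j < L → 2 ≤ s j ∧ s j % 2 = 0

variable {L : ℕ} {s : ℕ → ℕ}

lemma mem_comb {j l : ℕ} :
    (⟨j, l⟩ : (_ : ℕ) × ℕ) ∈ (Finset.range (L + 1)).sigma (fun j => Finset.range (s j)) ↔
      j ≤ L ∧ l < s j := by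
  simp

lemma IsCombSize.size_pos (C : IsCombSize L s) {j : ℕ} (hj : j ≤ L) : 0 < s j := by
  rcases Nat.eq_zero_or_pos j with rfl | h0
  · rw [C.first]; exact one_pos
  · rcases hj.eq_or_lt with rfl | h1
    · rw [C.last]; exact one_pos
    · have := C.inner j h0 h1; omega

/-- The parent function of the comb. -/
def combParent (C : IsCombSize L s) (x : CombVertex L s) : CombVertex L s :=
  ⟨combParentRaw x.1, by
    obtain ⟨⟨j, l⟩, hx⟩ := x
    rw [mem_comb] at hx
    simp only [combParentRaw]
    split_ifs
    · exact mem_comb.2 ⟨by omega, C.size_pos (by omega)⟩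
    · exact mem_comb.2 ⟨hx.1, by omega⟩
    · exact mem_comb.2 ⟨hx.1, by omega⟩⟩

/-- The root of the comb, the leaf at the start of the spine. -/
def combRoot (C : IsCombSize L s) : CombVertex L s :=
  ⟨⟨0, 0⟩, mem_comb.2 ⟨Nat.zero_le _, C.size_pos (Nat.zero_le _)⟩⟩

lemma comb_ext {j l j' l' : ℕ} {hx hy} :
    ((⟨⟨j, l⟩, hx⟩ : CombVertex L s) = ⟨⟨j', l'⟩, hy⟩) ↔ j = j' ∧ l = l' := by
  simp

lemma combParent_eq (C : IsCombSize L s) {j l j' l' : ℕ} {hx hy} :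
    combParent C ⟨⟨j, l⟩, hx⟩ = (⟨⟨j', l'⟩, hy⟩ : CombVertex L s) ↔
      (l = 0 ∧ j' = j - 1 ∧ l' = 0) ∨ (l ≠ 0 ∧ l % 2 = 0 ∧ j' = j ∧ l' = l - 1) ∨
        (l % 2 = 1 ∧ j' = j ∧ l' = l - 2) := by
  simp only [combParent, combParentRaw, Subtype.mk.injEq]
  split_ifs <;> simp only [Sigma.mk.injEq, heq_eq_eq] <;> omega

lemma combRoot_eq (C : IsCombSize L s) {j l : ℕ} {hx} :
    ((⟨⟨j, l⟩, hx⟩ : CombVertex L s) = combRoot C) ↔ j = 0 ∧ l = 0 := comb_ext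

lemma comb_isParent (C : IsCombSize L s) :
    IsParent (combParent C) (combRoot C) (fun x => x.1.1 + x.1.2) where
  root := by
    rw [combRoot, combParent_eq]; omega
  lt := by
    rintro ⟨⟨j, l⟩, hx⟩ hne
    rw [Ne, combRoot_eq] at hne
    simp only [combParent, combParentRaw]
    split_ifs <;> simp only <;> omega

lemma comb_mem_children (C : IsCombSize L s) {j l j' l' : ℕ} {hx hy} :
    (⟨⟨j, l⟩, hx⟩ : CombVertex L s) ∈ children (combParent C) (combRoot C) ⟨⟨j', l'⟩, hy⟩ ↔
      (0 < j ∧ l = 0 ∧ j' = j - 1 ∧ l' = 0) ∨ (l ≠ 0 ∧ l % 2 = 0 ∧ j' = j ∧ l' = l - 1) ∨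
        (l % 2 = 1 ∧ j' = j ∧ l' = l - 2) := by
  rw [children, Set.mem_ofPred_eq, combParent_eq, Ne, combRoot_eq]
  omega

lemma comb_children_root (C : IsCombSize L s) :
    (children (combParent C) (combRoot C) (combRoot C)) =
      {⟨⟨1, 0⟩, mem_comb.2 ⟨C.pos, C.size_pos C.pos⟩⟩} := by
  ext ⟨⟨j, l⟩, hx⟩
  rw [Set.mem_singleton_iff, comb_ext, combRoot]
  erw [comb_mem_children]
  have hx' := mem_comb.1 hx
  rcases Nat.eq_zero_or_pos j with rfl | h0
  · have := C.first; omega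
  · omega

lemma comb_children (C : IsCombSize L s) (x : CombVertex L s) (hx : x ≠ combRoot C) :
    (children (combParent C) (combRoot C) x).ncard = 0 ∨
      (children (combParent C) (combRoot C) x).ncard = 2 := by
  obtain ⟨⟨j, l⟩, hm⟩ := x
  rw [Ne, combRoot_eq] at hx
  have hm' := mem_comb.1 hm
  have hinner := C.inner j
  have hlast := C.last
  have hfirst := C.first
  have hj0 : j ≠ 0 := by
    rintro rfl; omega
  by_cases hl : l = 0
  · subst hl
    rcases hm'.1.eq_or_lt with rfl | hjL
    · left
      rw [Set.ncard_eq_zero, Set.eq_empty_iff_forall_notMem]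
      rintro ⟨⟨a, b⟩, hab⟩ hc
      rw [comb_mem_children] at hc
      have := mem_comb.1 hab
      rcases hc with hc | ⟨h1, h2, rfl, h3⟩ | ⟨h1, rfl, h3⟩ <;> omega
    · right
      have h2 := hinner (by omega) hjL
      rw [Set.ncard_eq_two]
      refine ⟨⟨⟨j + 1, 0⟩, mem_comb.2 ⟨by omega, C.size_pos (by omega)⟩⟩,
        ⟨⟨j, 1⟩, mem_comb.2 ⟨by omega, by omega⟩⟩, by rw [Ne, comb_ext]; omega, ?_⟩
      ext ⟨⟨a, b⟩, hab⟩
      rw [comb_mem_children, Set.mem_insert_iff, Set.mem_singleton_iff, comb_ext, comb_ext]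
      omega
  · have hjL : j ≠ L := by
      rintro rfl; omega
    have h2 := hinner (by omega) (by omega)
    by_cases hc : l % 2 = 1 ∧ l + 2 < s j
    · right
      rw [Set.ncard_eq_two]
      refine ⟨⟨⟨j, l + 1⟩, mem_comb.2 ⟨by omega, by omega⟩⟩,
        ⟨⟨j, l + 2⟩, mem_comb.2 ⟨by omega, by omega⟩⟩, by rw [Ne, comb_ext]; omega, ?_⟩
      ext ⟨⟨a, b⟩, hab⟩
      rw [comb_mem_children, Set.mem_insert_iff, Set.mem_singleton_iff, comb_ext, comb_ext]
      omega
    · left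
      rw [Set.ncard_eq_zero, Set.eq_empty_iff_forall_notMem]
      rintro ⟨⟨a, b⟩, hab⟩ hd
      rw [comb_mem_children] at hd
      have := mem_comb.1 hab
      rcases hd with hd | ⟨h3, h4, rfl, h5⟩ | ⟨h3, rfl, h5⟩ <;> omega

lemma comb_branch_spine (C : IsCombSize L s) {J : ℕ} (hJ : 0 < J) (hJL : J ≤ L) :
    IsBranch (combParent C) (combRoot C)
      ⟨⟨J, 0⟩, mem_comb.2 ⟨hJL, C.size_pos hJL⟩⟩ {x | J ≤ x.1.1} where
  mem := le_refl J
  root := by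
    simp only [combRoot, Set.mem_ofPred_eq]; omega
  parent := by
    simp only [combParent, combParentRaw, Set.mem_ofPred_eq, if_true]; omega
  iff := by
    rintro ⟨⟨j, l⟩, hx⟩ h1 h2
    rw [Ne, combRoot_eq] at h1
    rw [Ne, comb_ext] at h2
    simp only [combParent, combParentRaw, Set.mem_ofPred_eq]
    split_ifs <;> simp only <;> omega

lemma comb_branch_block (C : IsCombSize L s) {J : ℕ} (hJ : 0 < J) (hJL : J < L) :
    IsBranch (combParent C) (combRoot C)
      ⟨⟨J, 1⟩, mem_comb.2 ⟨hJL.le, (C.inner J hJ hJL).1⟩⟩ {x | x.1.1 = J ∧ 1 ≤ x.1.2} where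
  mem := ⟨rfl, le_refl 1⟩
  root := by
    simp only [combRoot, Set.mem_ofPred_eq]; omega
  parent := by
    simp [combParent, combParentRaw]
  iff := by
    rintro ⟨⟨j, l⟩, hx⟩ h1 h2
    rw [Ne, combRoot_eq] at h1
    rw [Ne, comb_ext] at h2
    simp only [combParent, combParentRaw, Set.mem_ofPred_eq]
    split_ifs <;> simp only <;> omega

lemma comb_ncard_spine (J : ℕ) :
    {x : CombVertex L s | J ≤ x.1.1}.ncard = ∑ j ∈ Finset.Ico J (L + 1), s j := by
  rw [← Set.ncard_image_of_injective _ Subtype.val_injective]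
  have : Subtype.val '' {x : CombVertex L s | J ≤ x.1.1} =
      ↑((Finset.Ico J (L + 1)).sigma fun j => Finset.range (s j)) := by
    ext ⟨j, l⟩
    simp
    omega
  rw [this, Set.ncard_coe_finset, Finset.card_sigma]
  simp

lemma comb_ncard_block {J : ℕ} (hJL : J ≤ L) :
    {x : CombVertex L s | x.1.1 = J ∧ 1 ≤ x.1.2}.ncard = s J - 1 := by
  rw [← Set.ncard_image_of_injective _ Subtype.val_injective]
  have : Subtype.val '' {x : CombVertex L s | x.1.1 = J ∧ 1 ≤ x.1.2} =
      ↑(({J} : Finset ℕ).sigma fun j => Finset.Ico 1 (s j)) := by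
    ext ⟨j, l⟩
    simp
    constructor
    · rintro ⟨⟨rfl, h2⟩, h3, h4⟩
      exact ⟨⟨h2, h4⟩, rfl⟩
    · rintro ⟨⟨h2, h4⟩, rfl⟩
      exact ⟨⟨rfl, h2⟩, hJL, h4⟩
  rw [this, Set.ncard_coe_finset, Finset.card_sigma]
  simp

end Comb

/-! ### The choice of sizes -/

/-- Sizes along the spine: `1` at both ends, `2 * i` at the `m` positions starting from `a`
(attached caterpillars with `i` leaves), and `2` elsewhere (attached single leaves). -/
def combSize (a m i : ℕ) (j : ℕ) : ℕ :=
  if j = 0 ∨ j = a + m + i - 1 then 1 else if a ≤ j ∧ j < a + m then 2 * i else 2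

lemma combSize_isCombSize {a m i : ℕ} (hi : 2 ≤ i) (ha : i ≤ a) :
    IsCombSize (a + m + i - 1) (combSize a m i) where
  pos := by omega
  first := by simp [combSize]
  last := by simp [combSize]
  inner := by
    intro j h1 h2
    simp only [combSize]
    split_ifs <;> omega

lemma combSize_sum_tail {a m i : ℕ} (hi : 2 ≤ i) (ha : i ≤ a) :
    ∑ j ∈ Finset.Ico (a + m) (a + m + i - 1 + 1), combSize a m i j = 2 * i - 1 := by
  rw [Finset.sum_Ico_succ_top (by omega)]
  have : ∀ j ∈ Finset.Ico (a + m) (a + m + i - 1), combSize a m i j = 2 := by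
    intro j hj
    rw [Finset.mem_Ico] at hj
    simp only [combSize]
    split_ifs <;> omega
  rw [Finset.sum_congr rfl this]
  simp [combSize]
  omega

lemma combSize_sum {a m i J : ℕ} (hi : 2 ≤ i) (ha : i ≤ a) (hJ : 0 < J) (hJa : J ≤ a) :
    ∑ j ∈ Finset.Ico J (a + m + i - 1 + 1), combSize a m i j =
      2 * (a - J) + 2 * (i * m) + (2 * i - 1) := by
  rw [← Finset.sum_Ico_consecutive _ (show J ≤ a + m by omega) (by omega), combSize_sum_tail hi ha,
    ← Finset.sum_Ico_consecutive _ hJa (show a ≤ a + m by omega)]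
  have h1 : ∀ j ∈ Finset.Ico J a, combSize a m i j = 2 := by
    intro j hj
    rw [Finset.mem_Ico] at hj
    simp only [combSize]
    split_ifs <;> omega
  have h2 : ∀ j ∈ Finset.Ico a (a + m), combSize a m i j = 2 * i := by
    intro j hj
    rw [Finset.mem_Ico] at hj
    simp only [combSize]
    split_ifs <;> omega
  rw [Finset.sum_congr rfl h1, Finset.sum_congr rfl h2]
  simp
  ring

/-- For all integers `n`, `i` with `2 ≤ i` and `3 * i ≤ n`, there is a finite tree in which
every vertex has degree 1 or 3, with exactly `n` vertices of degree 1, having at least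
`⌊n / i⌋` distinct edges `e` such that one of the two connected components of the graph
obtained by deleting `e` contains exactly `i` vertices of degree 1 of the tree. -/
theorem exists_trivalent_tree_many_separating_edges (n i : ℕ) (hi : 2 ≤ i) (hni : 3 * i ≤ n) :
    ∃ (V : Type) (_ : Fintype V) (G : SimpleGraph V),
      G.IsTree ∧
      (∀ v : V, (G.neighborSet v).ncard = 1 ∨ (G.neighborSet v).ncard = 3) ∧
      {v : V | (G.neighborSet v).ncard = 1}.ncard = n ∧
      ∃ F : Finset (Sym2 V),
        n / i ≤ F.card ∧
        ∀ e ∈ F, e ∈ G.edgeSet ∧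
          ∃ c : (G.deleteEdges {e}).ConnectedComponent,
            {v : V | (G.neighborSet v).ncard = 1 ∧
              (G.deleteEdges {e}).connectedComponentMk v = c}.ncard = i := by

  classical
  obtain ⟨k, r, hk, hr, hn⟩ : ∃ k r, n / i = k ∧ r < i ∧ n = i * k + r :=
    ⟨n / i, n % i, rfl, Nat.mod_lt _ (by omega), (Nat.div_add_mod n i).symm⟩
  obtain ⟨m, rfl⟩ : ∃ m, k = m + 2 := by
    have : 3 ≤ n / i := (Nat.le_div_iff_mul_le (by omega)).2 hni
    exact ⟨k - 2, by omega⟩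
  have hm : 0 < m := by
    have : 3 ≤ n / i := (Nat.le_div_iff_mul_le (by omega)).2 hni
    omega
  have hn' : n = i * m + 2 * i + r := by rw [hn]; ring
  have ha : i ≤ i + r := Nat.le_add_right _ _
  have C := combSize_isCombSize (m := m) hi ha
  set a := i + r with ha_def
  set L := a + m + i - 1 with hL
  set s := combSize a m i with hs
  have H := comb_isParent C
  have hc := comb_children C
  set p := combParent C
  set ρ := combRoot C
  have hroot : ((parentGraph p).neighborSet ρ).ncard = 1 := by
    rw [parentGraph_neighborSet_root H, comb_children_root C, Set.ncard_singleton]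
  -- The branch at the only child of the root contains all leaves except the root.
  have htotal : {v | ((parentGraph p).neighborSet v).ncard = 1}.ncard = n := by
    have B := comb_branch_spine C one_pos C.pos
    have h1 := branch_leaf_count H B hc
    rw [comb_ncard_spine, combSize_sum hi ha one_pos (by omega)] at h1
    have h2 : {v | ((parentGraph p).neighborSet v).ncard = 1} =
        insert ρ {u | ((parentGraph p).neighborSet u).ncard = 1 ∧
          u ∈ {x : CombVertex L s | 1 ≤ x.1.1}} := by
      ext x
      constructor
      · intro hx
        by_cases hxr : x = ρ
        · exact Or.inl hxr
        · refine Or.inr ⟨hx, ?_⟩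
          obtain ⟨⟨j, l⟩, hjl⟩ := x
          rw [combRoot_eq] at hxr
          have h3 := mem_comb.1 hjl
          have h4 := C.first
          simp only [Set.mem_ofPred_eq]
          by_contra h5
          obtain rfl : j = 0 := by omega
          omega
      · rintro (rfl | hx)
        · exact hroot
        · exact hx.1
    rw [h2, Set.ncard_insert_of_notMem (fun hx => B.root hx.2)]
    omega
  refine ⟨CombVertex L s, inferInstance, parentGraph p, parentGraph_isTree H, ?_, htotal, ?_⟩
  · intro v
    by_cases hv : v = ρ
    · rw [hv]; exact Or.inl hroot
    · rw [parentGraph_ncard_neighborSet H hv]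
      have := hc v hv
      omega
  -- The lower endpoints of the selected edges: one per big caterpillar, and two on the spine.
  let P : Finset ((_ : ℕ) × ℕ) :=
    insert ⟨i, 0⟩ (insert ⟨a + m, 0⟩ ((Finset.Ico a (a + m)).image fun j => ⟨j, 1⟩))
  have hPcard : P.card = m + 2 := by
    rw [Finset.card_insert_of_notMem, Finset.card_insert_of_notMem, Finset.card_image_of_injective]
    · simp
    · intro x y hxy
      simpa using hxy
    · simp
    · simp; omega
  have hsa : ∀ j, a ≤ j → j < a + m → s j = 2 * i := by
    intro j h1 h2
    simp only [hs, combSize]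
    split_ifs <;> omega
  have hPmem : ∀ x ∈ P, x ∈ (Finset.range (L + 1)).sigma fun j => Finset.range (s j) := by
    intro x hx
    simp only [P, Finset.mem_insert, Finset.mem_image, Finset.mem_Ico] at hx
    rcases hx with rfl | rfl | ⟨j, hj, rfl⟩
    · exact mem_comb.2 ⟨by omega, C.size_pos (by omega)⟩
    · exact mem_comb.2 ⟨by omega, C.size_pos (by omega)⟩
    · exact mem_comb.2 ⟨by omega, by rw [hsa j hj.1 hj.2]; omega⟩
  let Q : Finset (CombVertex L s) := P.attach.image fun x => ⟨x.1, hPmem x.1 x.2⟩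
  have hQ : ∀ v ∈ Q, v.1 ∈ P := by
    intro v hv
    simp only [Q, Finset.mem_image, Finset.mem_attach, true_and] at hv
    obtain ⟨x, rfl⟩ := hv
    exact x.2
  have hQcard : Q.card = m + 2 := by
    rw [Finset.card_image_of_injective, Finset.card_attach, hPcard]
    intro x y hxy
    exact Subtype.ext (Subtype.mk.inj hxy)
  have hQroot : ∀ v ∈ Q, v ≠ ρ := by
    rintro v hv rfl
    have h1 := hQ _ hv
    simp only [P, ρ, combRoot, Finset.mem_insert, Finset.mem_image, Finset.mem_Ico,
      Sigma.mk.injEq, heq_eq_eq] at h1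
    rcases h1 with h1 | h1 | ⟨j, hj, h2, h3⟩ <;> omega
  have below : ∀ (v : CombVertex L s) (S : Set (CombVertex L s)), IsBranch p ρ v S →
      S.ncard = 2 * i - 1 → ∃ c : ((parentGraph p).deleteEdges {s(v, p v)}).ConnectedComponent,
        {u | ((parentGraph p).neighborSet u).ncard = 1 ∧
          ((parentGraph p).deleteEdges {s(v, p v)}).connectedComponentMk u = c}.ncard = i := by
    intro v S B hS
    refine ⟨SimpleGraph.connectedComponentMk _ v, ?_⟩
    simp only [SimpleGraph.ConnectedComponent.eq, reachable_iff_mem_branch H B]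
    have := branch_leaf_count H B hc
    omega
  refine ⟨Q.image fun v => s(v, p v), ?_, ?_⟩
  · rw [Finset.card_image_of_injOn (H.edge_injOn.mono fun v hv => hQroot v hv), hQcard, hk]
  · intro e he
    obtain ⟨v, hv, rfl⟩ := Finset.mem_image.1 he
    refine ⟨H.adj (hQroot v hv), ?_⟩
    have h1 := hQ v hv
    obtain ⟨x, hx⟩ := v
    simp only [P, Finset.mem_insert, Finset.mem_image, Finset.mem_Ico] at h1
    rcases h1 with rfl | rfl | ⟨j, hj, rfl⟩
    · -- Near the root, the `i` leaves lie on the root's side of the edge.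
      have B := comb_branch_spine C (J := i) (by omega) (by omega)
      refine ⟨SimpleGraph.connectedComponentMk _ ρ, ?_⟩
      simp only [SimpleGraph.ConnectedComponent.eq, reachable_root_iff_notMem_branch H B]
      have h1 := branch_leaf_count H B hc
      rw [comb_ncard_spine, combSize_sum hi ha (by omega) ha] at h1
      have h2 := Set.ncard_inter_add_ncard_sdiff_eq_ncard
        {v | ((parentGraph p).neighborSet v).ncard = 1} {x : CombVertex L s | i ≤ x.1.1}
      rw [htotal] at h2
      change _ + Set.ncard {u | _ ∧ _} = n at h2
      change 2 * Set.ncard ({v | ((parentGraph p).neighborSet v).ncard = 1} ∩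
        {x : CombVertex L s | i ≤ x.1.1}) = _ at h1
      simp only [Set.mem_ofPred_eq] at h2 ⊢
      omega
    · exact below _ _ (comb_branch_spine C (J := a + m) (by omega) (by omega))
        (by rw [comb_ncard_spine, combSize_sum_tail hi ha])
    · exact below _ _ (comb_branch_block C (J := j) (by omega) (by omega))
        (by rw [comb_ncard_block (by omega), hsa j hj.1 hj.2])
end
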